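/- arXiv:1401.4901 — 4 statements merged into one kernel-verified Lean document; each statement's English description precedes it below -/
import Mathlib

section
/- Let Q be of Bethe form of degree N. Then there exist complex numbers z₀,…,z_{2(N+1)} with z_{2(N+1)} = 2κ₊κ₋ cosh(α₊ + α₋ − β₊ + β₋ − (N+1)η)/(sinh ζ₊ sinh ζ₋) such that Z_Q(λ) = Σ_{a=0}^{2(N+1)} z_a cosh^a(2λ) for every λ ∈ ℂ with sinh(2λ) ≠ 0. In particular Z_Q extends to an even entire function satisfying Z_Q(λ + iπ) = Z_Q(λ), i.e. an even trigonometric polynomial of degree 4N + 4. -/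
/-!
Multiply `A(λ) Q(λ - η)` by `sinh 2λ` to remove its denominator. The result `t` is a product of
factors `sinh (λ + x)` and `cosh (λ + x)`, hence a trigonometric polynomial, that is, a
polynomial in `e^{2λ}` up to a power of `e^λ`. Since `Q` is even and `sinh` is odd, the second
term of `Z_Q` is the reflection of the first one, and `Z_Q(λ) sinh 2λ = t(λ) - t(-λ)`. The
right-hand side is a combination of the functions `sinh 2nλ`, and
`sinh nθ = U_{n-1}(cosh θ) sinh θ` for the Chebyshev polynomials `U` of the second kind, so `Z_Q`
is a polynomial in `cosh 2λ`. As `U_{n-1}` has leading coefficient `2^{n-1}`, the leading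
coefficient of `Z_Q` is determined by the top and bottom coefficients of `t`, and these are
multiplicative over the factors of `t`.
-/

open Complex Finset

noncomputable section

namespace XXZ

/-- `a(λ) = ∏ₙ sinh(λ - ξₙ + η/2)` -/
def aF (N : ℕ) (η : ℂ) (ξ : Fin N → ℂ) (z : ℂ) : ℂ :=
  ∏ n : Fin N, Complex.sinh (z - ξ n + η / 2)

/-- `d(λ) = a(λ - η)` -/
def dF (N : ℕ) (η : ℂ) (ξ : Fin N → ℂ) (z : ℂ) : ℂ := aF N η ξ (z - η)

/-- `g₊(λ)` -/
def gPlus (η αp βp : ℂ) (z : ℂ) : ℂ :=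
  Complex.sinh (z + αp - η / 2) * Complex.cosh (z - βp - η / 2) /
    (Complex.sinh αp * Complex.cosh βp)

/-- `g₋(λ)` -/
def gMinus (η αm βm : ℂ) (z : ℂ) : ℂ :=
  Complex.sinh (z + αm - η / 2) * Complex.cosh (z + βm - η / 2) /
    (Complex.sinh αm * Complex.cosh βm)

/-- `A(λ)` -/
def AF (N : ℕ) (η : ℂ) (ξ : Fin N → ℂ) (αp βp αm βm : ℂ) (z : ℂ) : ℂ :=
  (-1 : ℂ) ^ N * (Complex.sinh (2 * z + η) / Complex.sinh (2 * z)) *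
    gPlus η αp βp z * gMinus η αm βm z * aF N η ξ z * dF N η ξ (-z)

/-- `ζₙ⁽⁰⁾ = ξₙ - η/2` -/
def zeta0 (N : ℕ) (η : ℂ) (ξ : Fin N → ℂ) (n : Fin N) : ℂ := ξ n - η / 2

/-- `ζₙ⁽¹⁾ = ξₙ + η/2` -/
def zeta1 (N : ℕ) (η : ℂ) (ξ : Fin N → ℂ) (n : Fin N) : ℂ := ξ n + η / 2

/-- `g_a(λ)` -/
def gA (N : ℕ) (η : ℂ) (ξ : Fin N → ℂ) (a : Fin N) (z : ℂ) : ℂ :=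
  (Complex.cosh (2 * z) ^ 2 - Complex.cosh η ^ 2) /
      (Complex.cosh (2 * zeta0 N η ξ a) ^ 2 - Complex.cosh η ^ 2) *
    ∏ b ∈ Finset.univ.erase a,
      (Complex.cosh (2 * z) - Complex.cosh (2 * zeta0 N η ξ b)) /
        (Complex.cosh (2 * zeta0 N η ξ a) - Complex.cosh (2 * zeta0 N η ξ b))

/-- `f(λ)` -/
def fF (N : ℕ) (η : ℂ) (ξ : Fin N → ℂ) (ζp ζm κp κm τp τm αp βp αm βm : ℂ) (z : ℂ) : ℂ :=
  (Complex.cosh (2 * z) + Complex.cosh η) / (2 * Complex.cosh η) *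
      (∏ b : Fin N, (Complex.cosh (2 * z) - Complex.cosh (2 * zeta0 N η ξ b)) /
        (Complex.cosh η - Complex.cosh (2 * zeta0 N η ξ b))) *
      AF N η ξ αp βp αm βm (η / 2)
  - (-1 : ℂ) ^ N * ((Complex.cosh (2 * z) - Complex.cosh η) / (2 * Complex.cosh η)) *
      (∏ b : Fin N, (Complex.cosh (2 * z) - Complex.cosh (2 * zeta0 N η ξ b)) /
        (Complex.cosh η + Complex.cosh (2 * zeta0 N η ξ b))) *
      AF N η ξ αp βp αm βm (η / 2 + Real.pi * Complex.I / 2)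
  + (2 : ℂ) ^ ((1 : ℤ) - (N : ℤ)) *
      (κp * κm * Complex.cosh (τp - τm) / (Complex.sinh ζp * Complex.sinh ζm)) *
      (Complex.cosh (2 * z) ^ 2 - Complex.cosh η ^ 2) *
      ∏ b : Fin N, (Complex.cosh (2 * z) - Complex.cosh (2 * zeta0 N η ξ b))

/-- `qₙ`, the explicit expression of the quantum determinant combination. -/
def qF (N : ℕ) (η : ℂ) (ξ : Fin N → ℂ) (αp βp αm βm : ℂ) (n : Fin N) : ℂ :=
  Complex.sinh (2 * η - 2 * ξ n) * Complex.sinh (2 * ξ n + 2 * η) *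
    gPlus η αp βp (ξ n + η / 2) * gPlus η αp βp (η / 2 - ξ n) *
    gMinus η αm βm (ξ n + η / 2) * gMinus η αm βm (η / 2 - ξ n) *
    aF N η ξ (ξ n + η / 2) * dF N η ξ (ξ n - η / 2) *
    aF N η ξ (η / 2 - ξ n) * dF N η ξ (-ξ n - η / 2) /
    (Complex.sinh (η + 2 * ξ n) * Complex.sinh (η - 2 * ξ n))

/-- `Σ_T`, the SOV characterization of the transfer matrix spectrum. -/
def SigmaT (N : ℕ) (η : ℂ) (ξ : Fin N → ℂ) (ζp ζm κp κm τp τm αp βp αm βm : ℂ) :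
    Set (ℂ → ℂ) :=
  { t | ∃ x : Fin N → ℂ,
      (∀ n : Fin N,
        x n * ((∑ a : Fin N, gA N η ξ a (zeta1 N η ξ n) * x a) +
          fF N η ξ ζp ζm κp κm τp τm αp βp αm βm (zeta1 N η ξ n)) =
          qF N η ξ αp βp αm βm n) ∧
      t = fun z => fF N η ξ ζp ζm κp κm τp τm αp βp αm βm z +
        ∑ a : Fin N, gA N η ξ a z * x a }

/-- genericity of the inhomogeneity parameters -/
def Generic (N : ℕ) (η : ℂ) (ξ : Fin N → ℂ) : Prop :=
  (∀ a b : Fin N, a ≠ b → ∀ r : ℤ, |r| ≤ 1 → ∀ k : ℤ,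
      ξ a + ξ b - r * η ≠ Real.pi * Complex.I * k ∧
      ξ a - ξ b - r * η ≠ Real.pi * Complex.I * k) ∧
  ∀ a : Fin N, Complex.cosh (2 * zeta0 N η ξ a) ^ 2 ≠ Complex.cosh η ^ 2

/-- `Y⁽ⁱ'ʳ⁾` -/
def YF (N : ℕ) (η τp τm αp βp αm βm : ℂ) (i : ℕ) (r : ℤ) : ℂ :=
  τm - τp + (-1 : ℂ) ^ i * (((N : ℂ) - 1 - (r : ℂ)) * η + αm + αp + βm - βp)

/-- `X_{k,m}⁽ⁱ⁾` -/
def XF (N : ℕ) (η τp τm αp βp αm βm : ℂ) (i k m : ℕ) : ℂ :=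
  (-1 : ℂ) ^ i * (1 - (N : ℂ)) * η + τm - τp + (-1 : ℂ) ^ k * (αm + βm) -
    (-1 : ℂ) ^ m * (αp - βp) + Real.pi * Complex.I * ((k : ℂ) + (m : ℂ))

/-- the boundary parameters lie in `N_SOV` -/
def InNSOV (N : ℕ) (η τp τm αp βp αm βm : ℂ) : Prop :=
  ∃ k h m n : Fin 2,
    XF N η τp τm αp βp αm βm 0 (k : ℕ) (m : ℕ) = 0 ∧
    XF N η τp τm αp βp αm βm 1 (h : ℕ) (n : ℕ) = 0

/-- `F₀` -/
def F0 (N : ℕ) (η ζp ζm κp κm τp τm αp βp αm βm : ℂ) : ℂ :=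
  2 * κp * κm * (Complex.cosh (τp - τm) -
      Complex.cosh (αp + αm - βp + βm - ((N : ℂ) + 1) * η)) /
    (Complex.sinh ζp * Complex.sinh ζm)

/-- the inhomogeneous term `F(λ)` -/
def FF (N : ℕ) (η : ℂ) (ξ : Fin N → ℂ) (ζp ζm κp κm τp τm αp βp αm βm : ℂ) (z : ℂ) : ℂ :=
  2 ^ N * F0 N η ζp ζm κp κm τp τm αp βp αm βm *
    (Complex.cosh (2 * z) ^ 2 - Complex.cosh η ^ 2) *
    aF N η ξ z * aF N η ξ (-z) * dF N η ξ z * dF N η ξ (-z)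

/-- `Q` is of Bethe form of degree `N` -/
def BetheForm (N : ℕ) (Q : ℂ → ℂ) : Prop :=
  ∃ l : Fin N → ℂ, ∀ z : ℂ,
    Q z = 2 ^ N * ∏ a : Fin N, (Complex.cosh (2 * z) - Complex.cosh (2 * l a))

/-- `Z_Q(λ) = A(λ)Q(λ-η) + A(-λ)Q(λ+η)` -/
def ZZ (N : ℕ) (η : ℂ) (ξ : Fin N → ℂ) (αp βp αm βm : ℂ) (Q : ℂ → ℂ) (z : ℂ) : ℂ :=
  AF N η ξ αp βp αm βm z * Q (z - η) + AF N η ξ αp βp αm βm (-z) * Q (z + η)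

/-- `t` is a trigonometric polynomial of degree `M` -/
def IsTrigPolyDeg (M : ℕ) (t : ℂ → ℂ) : Prop :=
  ∃ P : Polynomial ℂ, P.natDegree = M ∧
    ∀ z : ℂ, Complex.exp ((M : ℂ) * z) * t z = Polynomial.eval (Complex.exp (2 * z)) P

/-- `t` is a trigonometric polynomial -/
def IsTrigPoly (t : ℂ → ℂ) : Prop := ∃ M : ℕ, IsTrigPolyDeg M t

/-- `Σ_Q` -/
def SigmaQ (N : ℕ) (η : ℂ) (ξ : Fin N → ℂ) (ζp ζm κp κm τp τm αp βp αm βm : ℂ) :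
    Set (ℂ → ℂ) :=
  { Q | BetheForm N Q ∧ ∃ t : ℂ → ℂ, IsTrigPoly t ∧
      ∀ z : ℂ, Complex.sinh (2 * z) ≠ 0 →
        ZZ N η ξ αp βp αm βm Q z + FF N η ξ ζp ζm κp κm τp τm αp βp αm βm z = t z * Q z }

section Antisymmetrization

open Polynomial

lemma natDegree_chebyshevU_le {R : Type*} [CommRing R] [IsDomain R] [NeZero (2 : R)]
    {n : ℤ} {K : ℕ} (hn : (n + 1).natAbs ≤ K + 1) : (Chebyshev.U R n).natDegree ≤ K := by
  rw [Chebyshev.natDegree_U]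
  omega

lemma coeff_chebyshevU_eq_zero {R : Type*} [CommRing R] [IsDomain R] [NeZero (2 : R)]
    {n : ℤ} {K : ℕ} (hn : (n + 1).natAbs ≤ K) : (Chebyshev.U R n).coeff K = 0 := by
  by_cases h : n = -1
  · simp [h]
  · apply coeff_eq_zero_of_natDegree_lt
    rw [Chebyshev.natDegree_U]
    omega

lemma coeff_chebyshevU_natCast_self {R : Type*} [CommRing R] [IsDomain R] [NeZero (2 : R)]
    (K : ℕ) : (Chebyshev.U R K).coeff K = 2 ^ K := by
  rw [← Chebyshev.leadingCoeff_U_natCast, leadingCoeff, Chebyshev.natDegree_U_natCast]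

/-- The polynomial `T` with `T(cosh θ) sinh θ = L(θ) - L(-θ)`, where
`L(θ) = ∑ⱼ pⱼ e^{(j - K - 1) θ}` with `j ≤ 2 K + 2`. The Chebyshev polynomials have integer indices,
so the exponents of `L` need not be folded to nonnegative ones. -/
def antisymmQuotient {R : Type*} [CommRing R] (K : ℕ) (p : R[X]) : R[X] :=
  ∑ j ∈ range (2 * K + 3), C (2 * p.coeff j) * Chebyshev.U R (j - K - 2)

lemma natDegree_antisymmQuotient_le {R : Type*} [CommRing R] [IsDomain R] [NeZero (2 : R)]
    (K : ℕ) (p : R[X]) : (antisymmQuotient K p).natDegree ≤ K := by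
  refine natDegree_sum_le_of_forall_le _ _ fun j hj => ?_
  rw [mem_range] at hj
  exact (natDegree_C_mul_le _ _).trans (natDegree_chebyshevU_le (by grind))

lemma coeff_antisymmQuotient {R : Type*} [CommRing R] [IsDomain R] [NeZero (2 : R)]
    (K : ℕ) (p : R[X]) :
    (antisymmQuotient K p).coeff K = 2 ^ (K + 1) * (p.coeff (2 * K + 2) - p.coeff 0) := by
  have middle : ∀ j ∈ range (2 * K + 1),
      2 * p.coeff (j + 1) * (Chebyshev.U R ((j + 1 : ℕ) - K - 2)).coeff K = 0 := fun j hj => by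
    rw [mem_range] at hj
    rw [coeff_chebyshevU_eq_zero (by grind), mul_zero]
  have bottom : Chebyshev.U R ((0 : ℕ) - K - 2) = -Chebyshev.U R K := by simp
  have top : ((2 * K + 2 : ℕ) : ℤ) - K - 2 = K := by push_cast; ring
  simp only [antisymmQuotient, finsetSum_coeff, coeff_C_mul]
  rw [sum_range_succ, sum_range_succ', sum_eq_zero middle, bottom, top, coeff_neg,
    coeff_chebyshevU_natCast_self]
  ring

lemma eval_cosh_antisymmQuotient_mul_sinh {K : ℕ} {p : ℂ[X]} (hp : p.natDegree ≤ 2 * K + 2)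
    (θ : ℂ) :
    (antisymmQuotient K p).eval (cosh θ) * sinh θ =
      exp (-((K + 1) * θ)) * p.eval (exp θ) - exp ((K + 1) * θ) * p.eval (exp (-θ)) := by
  have hlt : p.natDegree < 2 * K + 3 := Nat.lt_succ_of_le hp
  rw [eval_eq_sum_range' hlt, eval_eq_sum_range' hlt, antisymmQuotient, eval_finsetSum, sum_mul,
    mul_sum, mul_sum, ← sum_sub_distrib]
  refine sum_congr rfl fun j _ => ?_
  calc eval (cosh θ) (C (2 * p.coeff j) * Chebyshev.U ℂ (j - K - 2)) * sinh θ
      = p.coeff j * (2 * sinh ((j - K - 1) * θ)) := by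
        rw [eval_C_mul, mul_assoc, Chebyshev.U_complex_cosh]
        push_cast
        ring_nf
    _ = p.coeff j * (exp (-((K + 1) * θ) + j * θ) - exp ((K + 1) * θ + j * -θ)) := by
        rw [two_sinh]
        ring_nf
    _ = _ := by
        rw [exp_add, exp_add, exp_nat_mul, exp_nat_mul]
        ring

end Antisymmetrization

section ExtremeCoefficients

open Polynomial

/-- `t` is a trigonometric polynomial of degree at most `M`, `t(λ) = ∑ₖ pₖ e^{(2k - M) λ}` with
`0 ≤ k ≤ M`, whose extreme coefficients are `p_M = u` and `p₀ = v`. In contrast to `IsTrigPolyDeg`,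
`u` may vanish. -/
def HasExtremeCoeffs (M : ℕ) (u v : ℂ) (t : ℂ → ℂ) : Prop :=
  ∃ p : ℂ[X], p.natDegree ≤ M ∧ p.coeff M = u ∧ p.coeff 0 = v ∧
    ∀ z, exp (M * z) * t z = p.eval (exp (2 * z))

namespace HasExtremeCoeffs

lemma one : HasExtremeCoeffs 0 1 1 fun _ => 1 :=
  ⟨1, by simp, by simp, by simp, by simp⟩

lemma exp_add_exp_neg (u v : ℂ) :
    HasExtremeCoeffs 1 u v fun z => u * exp z + v * exp (-z) := by
  refine ⟨C u * X + C v, natDegree_linear_le, by simp, by simp, fun z => ?_⟩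
  have cancel : exp z * exp (-z) = 1 := by rw [← exp_add, add_neg_cancel, exp_zero]
  simp only [eval_add, eval_mul, eval_C, eval_X, two_mul, exp_add, Nat.cast_one, one_mul]
  linear_combination v * cancel

lemma sinh_add (x : ℂ) :
    HasExtremeCoeffs 1 (exp x / 2) (-exp (-x) / 2) fun z => sinh (z + x) := by
  convert exp_add_exp_neg (exp x / 2) (-exp (-x) / 2) using 2 with z
  rw [sinh, neg_add, exp_add, exp_add]
  ring

lemma cosh_add (x : ℂ) :
    HasExtremeCoeffs 1 (exp x / 2) (exp (-x) / 2) fun z => cosh (z + x) := by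
  convert exp_add_exp_neg (exp x / 2) (exp (-x) / 2) using 2 with z
  rw [cosh, neg_add, exp_add, exp_add]
  ring

variable {M M' : ℕ} {u v u' v' : ℂ} {t t' : ℂ → ℂ}

lemma const_mul (c : ℂ) (h : HasExtremeCoeffs M u v t) :
    HasExtremeCoeffs M (c * u) (c * v) fun z => c * t z := by
  obtain ⟨p, hdeg, rfl, rfl, hp⟩ := h
  refine ⟨C c * p, (natDegree_C_mul_le c p).trans hdeg, coeff_C_mul p, coeff_C_mul p, fun z => ?_⟩
  rw [eval_C_mul, ← hp]
  ring

lemma mul (h : HasExtremeCoeffs M u v t) (h' : HasExtremeCoeffs M' u' v' t') :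
    HasExtremeCoeffs (M + M') (u * u') (v * v') fun z => t z * t' z := by
  obtain ⟨p, hdeg, rfl, rfl, hp⟩ := h
  obtain ⟨p', hdeg', rfl, rfl, hp'⟩ := h'
  refine ⟨p * p', natDegree_mul_le_of_le hdeg hdeg', coeff_mul_add_eq_of_natDegree_le hdeg hdeg',
    mul_coeff_zero p p', fun z => ?_⟩
  rw [eval_mul, ← hp, ← hp', Nat.cast_add, add_mul, exp_add]
  ring

lemma prod {ι : Type*} (s : Finset ι) {M : ι → ℕ} {u v : ι → ℂ} {t : ι → ℂ → ℂ}
    (h : ∀ i ∈ s, HasExtremeCoeffs (M i) (u i) (v i) (t i)) :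
    HasExtremeCoeffs (∑ i ∈ s, M i) (∏ i ∈ s, u i) (∏ i ∈ s, v i) fun z => ∏ i ∈ s, t i z := by
  classical
  induction s using Finset.induction_on with
  | empty => simpa using one
  | insert i s hi ih =>
    rw [forall_mem_insert] at h
    simpa only [prod_insert hi, sum_insert hi] using h.1.mul (ih h.2)

lemma sinh_add_mul_sinh_add (x y : ℂ) :
    HasExtremeCoeffs 2 (exp (x + y) / 4) (exp (-(x + y)) / 4)
      fun z => sinh (z + x) * sinh (z + y) := by
  convert (sinh_add x).mul (sinh_add y) using 1
  · rw [exp_add]; ring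
  · rw [neg_add, exp_add]; ring

lemma sinh_add_mul_cosh_add (x y : ℂ) :
    HasExtremeCoeffs 2 (exp (x + y) / 4) (-exp (-(x + y)) / 4)
      fun z => sinh (z + x) * cosh (z + y) := by
  convert (sinh_add x).mul (cosh_add y) using 1
  · rw [exp_add]; ring
  · rw [neg_add, exp_add]; ring

lemma exists_sub_neg_eq_eval_cosh_mul_sinh {K : ℕ} (h : HasExtremeCoeffs (2 * K + 2) u v t) :
    ∃ T : ℂ[X], T.natDegree ≤ K ∧ T.coeff K = 2 ^ (K + 1) * (u - v) ∧
      ∀ z, t z - t (-z) = T.eval (cosh (2 * z)) * sinh (2 * z) := by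
  obtain ⟨p, hdeg, rfl, rfl, hp⟩ := h
  have laurent (z : ℂ) : t z = exp (-((K + 1) * (2 * z))) * p.eval (exp (2 * z)) := by
    rw [← hp, ← mul_assoc, ← exp_add]
    push_cast
    ring_nf
    simp
  refine ⟨antisymmQuotient K p, natDegree_antisymmQuotient_le K p, coeff_antisymmQuotient K p,
    fun z => ?_⟩
  rw [eval_cosh_antisymmQuotient_mul_sinh hdeg, laurent z, laurent (-z)]
  simp only [mul_neg, neg_neg]

end HasExtremeCoeffs

end ExtremeCoefficients

section BetheForm

variable {N : ℕ} {Q : ℂ → ℂ}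

lemma BetheForm.even (hQ : BetheForm N Q) : Function.Even Q := by
  obtain ⟨l, hl⟩ := hQ
  intro z
  simp only [hl, mul_neg, cosh_neg]

lemma cosh_two_mul_sub_cosh_two_mul (x y : ℂ) :
    cosh (2 * x) - cosh (2 * y) = 2 * (sinh (x + y) * sinh (x - y)) := by
  have hx : cosh (2 * x) = cosh ((x + y) + (x - y)) := by ring_nf
  have hy : cosh (2 * y) = cosh ((x + y) - (x - y)) := by ring_nf
  rw [hx, hy, cosh_add (x + y), cosh_sub (x + y)]
  ring

lemma BetheForm.hasExtremeCoeffs_comp_sub (hQ : BetheForm N Q) (c : ℂ) :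
    HasExtremeCoeffs (2 * N) (exp (-(2 * N * c))) (exp (2 * N * c)) fun z => Q (z - c) := by
  obtain ⟨l, hl⟩ := hQ
  have factor (a : Fin N) : HasExtremeCoeffs 2 (exp (-(2 * c)) / 2) (exp (2 * c) / 2)
      fun z => cosh (2 * (z - c)) - cosh (2 * l a) := by
    convert (HasExtremeCoeffs.sinh_add_mul_sinh_add (-c + l a) (-c - l a)).const_mul 2 using 1
    · ring_nf
    · ring_nf
    · funext z
      rw [cosh_two_mul_sub_cosh_two_mul]
      ring_nf
  convert (HasExtremeCoeffs.prod univ fun a _ => factor a).const_mul (2 ^ N) using 1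
  · simp [mul_comm]
  · rw [prod_const, card_univ, Fintype.card_fin, ← mul_pow, mul_div_cancel₀ _ two_ne_zero,
      ← exp_nat_mul]
    ring_nf
  · rw [prod_const, card_univ, Fintype.card_fin, ← mul_pow, mul_div_cancel₀ _ two_ne_zero,
      ← exp_nat_mul]
    ring_nf
  · funext z
    exact hl (z - c)

end BetheForm

section RegularizedCoefficient

variable (N : ℕ) (η : ℂ) (ξ : Fin N → ℂ) (αp βp αm βm : ℂ)

/-- The entire function `A(λ) sinh 2λ`. -/
def regularizedAF (z : ℂ) : ℂ :=
  sinh (2 * z + η) * gPlus η αp βp z * gMinus η αm βm z *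
    ((-1) ^ N * (aF N η ξ z * dF N η ξ (-z)))

lemma AF_eq_regularizedAF_div (z : ℂ) :
    AF N η ξ αp βp αm βm z = regularizedAF N η ξ αp βp αm βm z / sinh (2 * z) := by
  rw [AF, regularizedAF]
  ring

lemma ZZ_mul_sinh {Q : ℂ → ℂ} (hQ : Function.Even Q) {z : ℂ} (hz : sinh (2 * z) ≠ 0) :
    ZZ N η ξ αp βp αm βm Q z * sinh (2 * z) =
      regularizedAF N η ξ αp βp αm βm z * Q (z - η) -
        regularizedAF N η ξ αp βp αm βm (-z) * Q (-z - η) := by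
  have reflect : Q (z + η) = Q (-z - η) := by rw [← hQ (z + η), neg_add']
  rw [ZZ, AF_eq_regularizedAF_div, AF_eq_regularizedAF_div, reflect, mul_neg, sinh_neg]
  field_simp
  ring

lemma hasExtremeCoeffs_sinh_two_mul_add :
    HasExtremeCoeffs 2 (exp η / 2) (-exp (-η) / 2) fun z => sinh (2 * z + η) := by
  convert (HasExtremeCoeffs.sinh_add_mul_cosh_add (η / 2) (η / 2)).const_mul 2 using 1
  · ring_nf
  · ring_nf
  · funext z
    rw [← mul_assoc, ← sinh_two_mul]
    ring_nf

lemma hasExtremeCoeffs_gPlus :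
    HasExtremeCoeffs 2 (exp (αp - βp - η) / (4 * (sinh αp * cosh βp)))
      (-exp (-(αp - βp - η)) / (4 * (sinh αp * cosh βp))) (gPlus η αp βp) := by
  convert (HasExtremeCoeffs.sinh_add_mul_cosh_add (αp - η / 2) (-βp - η / 2)).const_mul
    (sinh αp * cosh βp)⁻¹ using 1
  · ring_nf
  · ring_nf
  · funext z
    rw [gPlus]
    ring_nf

lemma hasExtremeCoeffs_gMinus :
    HasExtremeCoeffs 2 (exp (αm + βm - η) / (4 * (sinh αm * cosh βm)))
      (-exp (-(αm + βm - η)) / (4 * (sinh αm * cosh βm))) (gMinus η αm βm) := by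
  convert (HasExtremeCoeffs.sinh_add_mul_cosh_add (αm - η / 2) (βm - η / 2)).const_mul
    (sinh αm * cosh βm)⁻¹ using 1
  · ring_nf
  · ring_nf
  · funext z
    rw [gMinus]
    ring_nf

lemma hasExtremeCoeffs_neg_one_pow_mul_aF_mul_dF_neg :
    HasExtremeCoeffs (2 * N) (exp (N * η) / 4 ^ N) (exp (-(N * η)) / 4 ^ N)
      fun z => (-1) ^ N * (aF N η ξ z * dF N η ξ (-z)) := by
  have factor (n : Fin N) : HasExtremeCoeffs 2 (exp η / 4) (exp (-η) / 4)
      fun z => -1 * (sinh (z - ξ n + η / 2) * sinh (-z - η - ξ n + η / 2)) := by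
    convert HasExtremeCoeffs.sinh_add_mul_sinh_add (-ξ n + η / 2) (ξ n + η / 2) using 1
    · ring_nf
    · ring_nf
    · funext z
      rw [show -z - η - ξ n + η / 2 = -(z + (ξ n + η / 2)) by ring, sinh_neg]
      ring_nf
  convert HasExtremeCoeffs.prod univ fun n _ => factor n using 1
  · simp [mul_comm]
  · rw [prod_const, card_univ, Fintype.card_fin, div_pow, exp_nat_mul]
  · rw [prod_const, card_univ, Fintype.card_fin, div_pow, ← mul_neg, exp_nat_mul]
  · funext z
    rw [aF, dF, aF, prod_mul_distrib, prod_mul_distrib, prod_const, card_univ, Fintype.card_fin]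

lemma hasExtremeCoeffs_regularizedAF :
    HasExtremeCoeffs (2 * N + 6)
      (exp (αp + αm - βp + βm + (N - 1) * η) /
        (32 * 4 ^ N * (sinh αp * cosh βp * (sinh αm * cosh βm))))
      (-exp (-(αp + αm - βp + βm + (N - 1) * η)) /
        (32 * 4 ^ N * (sinh αp * cosh βp * (sinh αm * cosh βm))))
      (regularizedAF N η ξ αp βp αm βm) := by
  have exponent : αp + αm - βp + βm + (N - 1) * η =
      η + (αp - βp - η) + (αm + βm - η) + N * η := by ring
  convert (((hasExtremeCoeffs_sinh_two_mul_add η).mul (hasExtremeCoeffs_gPlus η αp βp)).mul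
    (hasExtremeCoeffs_gMinus η αm βm)).mul
      (hasExtremeCoeffs_neg_one_pow_mul_aF_mul_dF_neg N η ξ) using 1
  · ring
  · rw [exponent, exp_add, exp_add, exp_add]
    ring
  · rw [exponent, neg_add, neg_add, neg_add, exp_add, exp_add, exp_add]
    ring
  · rfl

end RegularizedCoefficient

section LeadingCoefficient

open Polynomial

lemma exists_polynomial_ZZ_eq_eval_cosh {N : ℕ} (η : ℂ) (ξ : Fin N → ℂ) (αp βp αm βm : ℂ)
    {Q : ℂ → ℂ} (hQ : BetheForm N Q) :
    ∃ T : ℂ[X], T.natDegree ≤ 2 * (N + 1) ∧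
      T.coeff (2 * (N + 1)) = cosh (αp + αm - βp + βm - (N + 1) * η) /
        (2 * (sinh αp * cosh βp * (sinh αm * cosh βm))) ∧
      ∀ z, sinh (2 * z) ≠ 0 → ZZ N η ξ αp βp αm βm Q z = T.eval (cosh (2 * z)) := by
  have extreme := (hasExtremeCoeffs_regularizedAF N η ξ αp βp αm βm).mul
    (hQ.hasExtremeCoeffs_comp_sub η)
  rw [show 2 * N + 6 + 2 * N = 2 * (2 * (N + 1)) + 2 by ring] at extreme
  obtain ⟨T, hdeg, hlead, hT⟩ := extreme.exists_sub_neg_eq_eval_cosh_mul_sinh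
  refine ⟨T, hdeg, ?_, fun z hz => mul_right_cancel₀ hz ?_⟩
  · have top : exp (αp + αm - βp + βm + (N - 1) * η) * exp (-(2 * N * η)) =
        exp (αp + αm - βp + βm - (N + 1) * η) := by
      rw [← exp_add]; ring_nf
    have bottom : exp (-(αp + αm - βp + βm + (N - 1) * η)) * exp (2 * N * η) =
        exp (-(αp + αm - βp + βm - (N + 1) * η)) := by
      rw [← exp_add]; ring_nf
    have power : (2 : ℂ) ^ (2 * (N + 1) + 1) = 8 * 4 ^ N := by
      rw [show 2 * (N + 1) + 1 = 2 * N + 3 by ring, pow_add, pow_mul]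
      norm_num [mul_comm]
    rw [hlead, div_mul_eq_mul_div, div_mul_eq_mul_div, neg_mul, top, bottom, power, ← sub_div,
      sub_neg_eq_add, ← two_cosh]
    field_simp
    ring
  · rw [ZZ_mul_sinh N η ξ αp βp αm βm hQ.even hz, ← hT]

end LeadingCoefficient

theorem statement4_general {N : ℕ} (η : ℂ) (ξ : Fin N → ℂ) (αp αm βp βm : ℂ)
    (hαβp : sinh αp * cosh βp ≠ 0) (hαβm : sinh αm * cosh βm ≠ 0)
    {Q : ℂ → ℂ} (hQ : BetheForm N Q) :
    ∃ zc : ℕ → ℂ,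
      2 * (sinh αp * cosh βp * (sinh αm * cosh βm)) * zc (2 * (N + 1)) =
        cosh (αp + αm - βp + βm - (N + 1) * η) ∧
      (∀ z, sinh (2 * z) ≠ 0 → ZZ N η ξ αp βp αm βm Q z =
        ∑ a ∈ range (2 * (N + 1) + 1), zc a * cosh (2 * z) ^ a) ∧
      (∀ z, ∑ a ∈ range (2 * (N + 1) + 1), zc a * cosh (2 * (-z)) ^ a =
        ∑ a ∈ range (2 * (N + 1) + 1), zc a * cosh (2 * z) ^ a) ∧
      (∀ z, ∑ a ∈ range (2 * (N + 1) + 1), zc a * cosh (2 * (z + Real.pi * I)) ^ a =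
        ∑ a ∈ range (2 * (N + 1) + 1), zc a * cosh (2 * z) ^ a) := by
  obtain ⟨T, hdeg, hlead, hT⟩ := exists_polynomial_ZZ_eq_eval_cosh η ξ αp βp αm βm hQ
  have hden : 2 * (sinh αp * cosh βp * (sinh αm * cosh βm)) ≠ 0 :=
    mul_ne_zero two_ne_zero (mul_ne_zero hαβp hαβm)
  refine ⟨T.coeff, by rw [hlead, mul_div_cancel₀ _ hden], fun z hz => ?_, fun z => ?_, fun z => ?_⟩
  · rw [hT z hz, Polynomial.eval_eq_sum_range' (Nat.lt_succ_of_le hdeg)]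
  · rw [mul_neg, cosh_neg]
  · rw [show 2 * (z + Real.pi * I) = 2 * z + 2 * Real.pi * I by ring, cosh_periodic (2 * z)]

/-- Lemma 3.1: for `Q` of Bethe form, `Z_Q` is an even trigonometric
polynomial of degree `4N+4` in the variable `cosh 2λ`, with the prescribed leading
coefficient; in particular its polynomial extension is even and `iπ`-periodic. -/
theorem statement4
    (N : ℕ) (hN : 1 ≤ N) (η : ℂ) (ξ : Fin N → ℂ)
    (ζp ζm κp κm τp τm αp αm βp βm : ℂ)
    (hκp : κp ≠ 0) (hκm : κm ≠ 0)
    (hζp : Complex.sinh ζp ≠ 0) (hζm : Complex.sinh ζm ≠ 0)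
    (hαβp : Complex.sinh αp * Complex.cosh βp ≠ 0)
    (hαβm : Complex.sinh αm * Complex.cosh βm ≠ 0)
    (hrelp1 : Complex.sinh αp * Complex.cosh βp = Complex.sinh ζp / (2 * κp))
    (hrelp2 : Complex.cosh αp * Complex.sinh βp = Complex.cosh ζp / (2 * κp))
    (hrelm1 : Complex.sinh αm * Complex.cosh βm = Complex.sinh ζm / (2 * κm))
    (hrelm2 : Complex.cosh αm * Complex.sinh βm = Complex.cosh ζm / (2 * κm))
    (Q : ℂ → ℂ) (hQ : BetheForm N Q) :
    ∃ zc : ℕ → ℂ,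
      zc (2 * (N + 1)) =
        2 * κp * κm * Complex.cosh (αp + αm - βp + βm - ((N : ℂ) + 1) * η) /
          (Complex.sinh ζp * Complex.sinh ζm) ∧
      (∀ z : ℂ, Complex.sinh (2 * z) ≠ 0 →
        ZZ N η ξ αp βp αm βm Q z =
          ∑ a ∈ Finset.range (2 * (N + 1) + 1), zc a * Complex.cosh (2 * z) ^ a) ∧
      (∀ z : ℂ,
        (∑ a ∈ Finset.range (2 * (N + 1) + 1), zc a * Complex.cosh (2 * (-z)) ^ a) =
          ∑ a ∈ Finset.range (2 * (N + 1) + 1), zc a * Complex.cosh (2 * z) ^ a) ∧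
      (∀ z : ℂ,
        (∑ a ∈ Finset.range (2 * (N + 1) + 1), zc a *
            Complex.cosh (2 * (z + Real.pi * Complex.I)) ^ a) =
          ∑ a ∈ Finset.range (2 * (N + 1) + 1), zc a * Complex.cosh (2 * z) ^ a) := by
  obtain ⟨zc, hlead, hzc⟩ := statement4_general η ξ αp αm βp βm hαβp hαβm hQ
  exact ⟨zc, by rw [← hlead, hrelp1, hrelm1]; field_simp, hzc⟩

end XXZ
end
end

section
/- Assume κ₊ ≠ 0, κ₋ ≠ 0 and Y^{(i,r)} ∉ 2πiℤ for all i ∈ {0,1} and all r ∈ ℤ. Then for every τ ∈ Σ_T the homogeneous Baxter equation τ(λ)Q(λ) = A(λ)Q(λ−η) + A(−λ)Q(λ+η) admits no solution Q that is a nonzero Laurent polynomial in e^{λ}, i.e. there is no Q of the form Q(λ) = Σ_{a=−s}^{r} y_a e^{aλ} (r,s ∈ ℕ, y_a ∈ ℂ, Q not identically zero) satisfying the equation for all λ ∈ ℂ with sinh(2λ) ≠ 0. -/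
/-!
Compare the two sides of the Baxter equation as `λ → +∞` along the real axis. With
`S = α₊ + α₋ - β₊ + β₋` and `C = 16·4^N sinh α₊ cosh β₊ sinh α₋ cosh β₋`, the functions `τ(λ)`,
`A(λ)` and `A(-λ)` grow like `e^{(2N+4)λ}` with coefficients `2 cosh(τ₊ - τ₋) / C`,
`e^{S+(N-1)η} / C` and `e^{-S-(N-1)η} / C`; only the last term of `f` contributes to the first.
If `R` is the largest exponent occurring in `Q`, then `Q(λ ∓ η)` contributes the factor `e^{∓Rη}`,
so that `cosh(τ₊ - τ₋) = cosh(S + (N-1-R)η)`. Hence `Y^{(0,R)}` or `Y^{(1,R)}` lies in `2πiℤ`.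
-/

open Complex Finset

noncomputable section

namespace XXZ

/-! ### Exponential growth along the real axis -/

open Filter Topology

/-- The coefficient of `exp (n t)` in the growth of `f t` as `t → +∞` along the reals. The value
`c = 0` is allowed: `f` then grows more slowly than `exp (n t)`. -/
def HasLeadingCoeff (f : ℂ → ℂ) (n : ℝ) (c : ℂ) : Prop :=
  Tendsto (fun t : ℝ => exp (-(n * t)) * f t) atTop (𝓝 c)

namespace HasLeadingCoeff

variable {ι : Type*} {f g : ℂ → ℂ} {m n : ℝ} {c d : ℂ}

lemma const (c : ℂ) : HasLeadingCoeff (fun _ => c) 0 c := by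
  simp [HasLeadingCoeff]

lemma zero (n : ℝ) : HasLeadingCoeff (fun _ => 0) n 0 := by
  simp [HasLeadingCoeff]

lemma add (hf : HasLeadingCoeff f n c) (hg : HasLeadingCoeff g n d) :
    HasLeadingCoeff (fun z => f z + g z) n (c + d) :=
  (Tendsto.add hf hg).congr fun _ => (mul_add _ _ _).symm

lemma sub (hf : HasLeadingCoeff f n c) (hg : HasLeadingCoeff g n d) :
    HasLeadingCoeff (fun z => f z - g z) n (c - d) :=
  (Tendsto.sub hf hg).congr fun _ => (mul_sub _ _ _).symm

lemma mul (hf : HasLeadingCoeff f m c) (hg : HasLeadingCoeff g n d) :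
    HasLeadingCoeff (fun z => f z * g z) (m + n) (c * d) := by
  refine (Tendsto.mul hf hg).congr fun t => ?_
  rw [mul_mul_mul_comm, ← exp_add]
  push_cast
  ring_nf

lemma div (hf : HasLeadingCoeff f m c) (hg : HasLeadingCoeff g n d) (hd : d ≠ 0) :
    HasLeadingCoeff (fun z => f z / g z) (m - n) (c / d) := by
  refine (Tendsto.div hf hg hd).congr fun t => ?_
  rw [Pi.div_apply, mul_div_mul_comm, ← exp_sub]
  push_cast
  ring_nf

lemma const_mul (hf : HasLeadingCoeff f n c) (a : ℂ) :
    HasLeadingCoeff (fun z => a * f z) n (a * c) := by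
  simpa using (const a).mul hf

lemma mul_const (hf : HasLeadingCoeff f n c) (a : ℂ) :
    HasLeadingCoeff (fun z => f z * a) n (c * a) := by
  simpa using hf.mul (const a)

lemma div_const (hf : HasLeadingCoeff f n c) (a : ℂ) :
    HasLeadingCoeff (fun z => f z / a) n (c / a) := by
  simpa only [div_eq_mul_inv] using hf.mul_const a⁻¹

lemma sum {s : Finset ι} {F : ι → ℂ → ℂ} {C : ι → ℂ}
    (h : ∀ i ∈ s, HasLeadingCoeff (F i) n (C i)) :
    HasLeadingCoeff (fun z => ∑ i ∈ s, F i z) n (∑ i ∈ s, C i) := by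
  unfold HasLeadingCoeff at *
  simpa only [Finset.mul_sum] using tendsto_finsetSum s h

lemma prod {s : Finset ι} {F : ι → ℂ → ℂ} {C : ι → ℂ}
    (h : ∀ i ∈ s, HasLeadingCoeff (F i) n (C i)) :
    HasLeadingCoeff (fun z => ∏ i ∈ s, F i z) (#s * n) (∏ i ∈ s, C i) := by
  refine (tendsto_finsetProd s h).congr fun t => ?_
  rw [Finset.prod_mul_distrib, Finset.prod_const, ← exp_nat_mul]
  push_cast
  ring_nf

lemma of_lt (hf : HasLeadingCoeff f m c) (h : m < n) : HasLeadingCoeff f n 0 := by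
  have h_one : HasLeadingCoeff (fun _ => 1) (n - m) 0 := by
    simpa [HasLeadingCoeff, tendsto_exp_nhds_zero_iff] using
      tendsto_id.const_mul_atTop (sub_pos.2 h)
  simpa using h_one.mul hf

lemma unique (hf : HasLeadingCoeff f n c) (hg : HasLeadingCoeff g n d)
    (h : ∀ᶠ t : ℝ in atTop, f t = g t) : c = d :=
  tendsto_nhds_unique_of_eventuallyEq hf hg <| by
    filter_upwards [h] with t ht
    rw [ht]

lemma exp_mul_add (n : ℝ) (c : ℂ) :
    HasLeadingCoeff (fun z => exp (n * z + c)) n (exp c) := by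
  refine tendsto_const_nhds.congr fun t => ?_
  rw [← exp_add, neg_add_cancel_left]

lemma cosh_mul_add (hn : 0 < n) (c : ℂ) :
    HasLeadingCoeff (fun z => cosh (n * z + c)) n (exp c / 2) := by
  have h := ((exp_mul_add n c).add ((exp_mul_add (-n) (-c)).of_lt (neg_lt_self hn))).div_const 2
  convert h using 1
  · funext z
    rw [cosh, neg_add, ofReal_neg, neg_mul]
  · rw [add_zero]

lemma sinh_mul_add (hn : 0 < n) (c : ℂ) :
    HasLeadingCoeff (fun z => sinh (n * z + c)) n (exp c / 2) := by
  have h := ((exp_mul_add n c).sub ((exp_mul_add (-n) (-c)).of_lt (neg_lt_self hn))).div_const 2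
  convert h using 1
  · funext z
    rw [sinh, neg_add, ofReal_neg, neg_mul]
  · rw [sub_zero]

lemma cosh_add (c : ℂ) : HasLeadingCoeff (fun z => cosh (z + c)) 1 (exp c / 2) := by
  simpa using cosh_mul_add one_pos c

lemma sinh_add (c : ℂ) : HasLeadingCoeff (fun z => sinh (z + c)) 1 (exp c / 2) := by
  simpa using sinh_mul_add one_pos c

lemma cosh_two_mul : HasLeadingCoeff (fun z => cosh (2 * z)) 2 (1 / 2) := by
  simpa using cosh_mul_add two_pos 0

lemma cosh_two_mul_sub (c : ℂ) : HasLeadingCoeff (fun z => cosh (2 * z) - c) 2 (1 / 2) := by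
  simpa using cosh_two_mul.sub ((const c).of_lt two_pos)

lemma cosh_two_mul_sq_sub (c : ℂ) :
    HasLeadingCoeff (fun z => cosh (2 * z) ^ 2 - c) 4 (1 / 4) := by
  convert (cosh_two_mul.mul cosh_two_mul).sub ((const c).of_lt (by norm_num)) using 1
  · simp only [sq]
  all_goals norm_num

lemma prod_cosh_two_mul_sub (s : Finset ι) (c : ι → ℂ) :
    HasLeadingCoeff (fun z => ∏ b ∈ s, (cosh (2 * z) - c b)) (#s * 2) ((1 / 2) ^ #s) := by
  simpa only [Finset.prod_const] using prod fun b (_ : b ∈ s) => cosh_two_mul_sub (c b)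

lemma sinh_two_mul_add_div (c : ℂ) :
    HasLeadingCoeff (fun z => sinh (2 * z + c) / sinh (2 * z)) 0 (exp c) := by
  simpa using (sinh_mul_add two_pos c).div (sinh_mul_add two_pos 0) (by simp)

end HasLeadingCoeff

section ExponentialSum

variable {ι : Type*} {S : Finset ι} {ω : ι → ℝ} {y : ι → ℂ}

lemma hasLeadingCoeff_sum_exp_of_forall_lt {i : ι} (hi : i ∈ S)
    (h_lt : ∀ j ∈ S, y j ≠ 0 → j ≠ i → ω j < ω i) (c : ℂ) :
    HasLeadingCoeff (fun z => ∑ j ∈ S, y j * exp (ω j * (z + c))) (ω i)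
      (y i * exp (ω i * c)) := by
  classical
  have h_term (j : ι) : HasLeadingCoeff (fun z => y j * exp (ω j * (z + c))) (ω j)
      (y j * exp (ω j * c)) := by
    simpa only [mul_add] using (HasLeadingCoeff.exp_mul_add (ω j) (ω j * c)).const_mul (y j)
  have h_sum : HasLeadingCoeff (fun z => ∑ j ∈ S, y j * exp (ω j * (z + c))) (ω i)
      (∑ j ∈ S, if j = i then y i * exp (ω i * c) else 0) := by
    refine HasLeadingCoeff.sum fun j hj => ?_
    rcases eq_or_ne j i with rfl | hji
    · simpa using h_term j
    rw [if_neg hji]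
    rcases eq_or_ne (y j) 0 with hyj | hyj
    · simpa [hyj] using HasLeadingCoeff.zero (ω i)
    · exact (h_term j).of_lt (h_lt j hj hyj hji)
  simpa [hi] using h_sum

lemma exists_hasLeadingCoeff_sum_exp (hω : Set.InjOn ω S) (hy : ∃ i ∈ S, y i ≠ 0) :
    ∃ i ∈ S, y i ≠ 0 ∧ ∀ c : ℂ,
      HasLeadingCoeff (fun z => ∑ j ∈ S, y j * exp (ω j * (z + c))) (ω i)
        (y i * exp (ω i * c)) := by
  obtain ⟨i, hi, h_max⟩ :=
    Finset.exists_max_image {j ∈ S | y j ≠ 0} ω (filter_nonempty_iff.2 hy)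
  obtain ⟨hiS, hyi⟩ := Finset.mem_filter.1 hi
  refine ⟨i, hiS, hyi, hasLeadingCoeff_sum_exp_of_forall_lt hiS fun j hj hyj hji => ?_⟩
  exact (h_max j (Finset.mem_filter.2 ⟨hj, hyj⟩)).lt_of_ne fun h => hji (hω hj hiS h)

end ExponentialSum

/-! ### The coefficients `A(λ)` and `A(-λ)` -/

section BaxterCoefficient

variable {N : ℕ} (η : ℂ) (ξ : Fin N → ℂ) (αp βp αm βm : ℂ)

lemma gMinus_eq_gPlus_neg (α β : ℂ) : gMinus η α β = gPlus η α (-β) := by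
  funext z
  simp only [gMinus, gPlus, sub_neg_eq_add, cosh_neg]

lemma gPlus_neg (α β z : ℂ) : gPlus η α β (-z) = gPlus (-η) (-α) (-β) z := by
  have h_sinh : sinh (-z + α - η / 2) = -sinh (z + -α - -η / 2) := by
    rw [← sinh_neg]; ring_nf
  have h_cosh : cosh (-z - β - η / 2) = cosh (z - -β - -η / 2) := by
    rw [← cosh_neg]; ring_nf
  rw [gPlus, gPlus, h_sinh, h_cosh, sinh_neg, cosh_neg, neg_mul, neg_mul, neg_div, div_neg]

lemma dF_neg (z : ℂ) : dF N η ξ (-z) = (-1) ^ N * ∏ n, sinh (z + ξ n + η / 2) := by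
  have h_factor (n : Fin N) : sinh (-z - η - ξ n + η / 2) = -1 * sinh (z + ξ n + η / 2) := by
    rw [neg_one_mul, ← sinh_neg]; ring_nf
  simp only [dF, aF, h_factor, Finset.prod_mul_distrib, Finset.prod_const, Finset.card_fin]

lemma AF_eq (z : ℂ) :
    AF N η ξ αp βp αm βm z =
      sinh (2 * z + η) / sinh (2 * z) * gPlus η αp βp z * gPlus η αm (-βm) z *
        ∏ n, sinh (z - ξ n + η / 2) * sinh (z + ξ n + η / 2) := by
  have h_sign : (-1 : ℂ) ^ N * (-1) ^ N = 1 := by rw [← mul_pow]; norm_num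
  rw [AF, gMinus_eq_gPlus_neg, dF_neg, aF, Finset.prod_mul_distrib]
  linear_combination sinh (2 * z + η) / sinh (2 * z) * gPlus η αp βp z * gPlus η αm (-βm) z *
    (∏ n, sinh (z - ξ n + η / 2)) * (∏ n, sinh (z + ξ n + η / 2)) * h_sign

lemma AF_neg (z : ℂ) :
    AF N η ξ αp βp αm βm (-z) = AF N (-η) ξ (-αp) (-βp) (-αm) (-βm) z := by
  have h_ratio : sinh (2 * -z + η) / sinh (2 * -z) = sinh (2 * z + -η) / sinh (2 * z) := by
    rw [← neg_div_neg_eq, ← sinh_neg, ← sinh_neg]; ring_nf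
  have h_factor (n : Fin N) : sinh (-z - ξ n + η / 2) * sinh (-z + ξ n + η / 2) =
      sinh (z - ξ n + -η / 2) * sinh (z + ξ n + -η / 2) := by
    rw [mul_comm, ← neg_mul_neg, ← sinh_neg, ← sinh_neg]; ring_nf
  simp only [AF_eq, h_ratio, gPlus_neg, h_factor]

lemma hasLeadingCoeff_gPlus (α β : ℂ) :
    HasLeadingCoeff (gPlus η α β) 2 (exp (α - β - η) / (4 * (sinh α * cosh β))) := by
  have h := ((HasLeadingCoeff.sinh_add (α - η / 2)).mul
    (HasLeadingCoeff.cosh_add (-β - η / 2))).div_const (sinh α * cosh β)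
  convert h using 1
  · funext z
    simp only [gPlus]
    ring_nf
  · norm_num
  · rw [div_mul_div_comm, ← exp_add]
    ring_nf

lemma hasLeadingCoeff_sinh_mul_sinh (a : ℂ) :
    HasLeadingCoeff (fun z => sinh (z - a + η / 2) * sinh (z + a + η / 2)) 2 (exp η / 4) := by
  convert (HasLeadingCoeff.sinh_add (-a + η / 2)).mul (HasLeadingCoeff.sinh_add (a + η / 2))
    using 1
  · funext z
    ring_nf
  · norm_num
  · rw [div_mul_div_comm, ← exp_add]
    ring_nf

lemma hasLeadingCoeff_AF :
    HasLeadingCoeff (AF N η ξ αp βp αm βm) (2 * N + 4)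
      (exp (αp + αm - βp + βm + (N - 1) * η) /
        (16 * 4 ^ N * (sinh αp * cosh βp) * (sinh αm * cosh βm))) := by
  have h := (((HasLeadingCoeff.sinh_two_mul_add_div η).mul
    (hasLeadingCoeff_gPlus η αp βp)).mul (hasLeadingCoeff_gPlus η αm (-βm))).mul
    (HasLeadingCoeff.prod fun n (_ : n ∈ univ) => hasLeadingCoeff_sinh_mul_sinh η (ξ n))
  rw [Finset.prod_const, Finset.card_fin, div_pow] at h
  convert h using 1
  · exact funext (AF_eq η ξ αp βp αm βm)
  · ring
  · have h_exp : exp (αp + αm - βp + βm + (N - 1) * η) =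
        exp η * exp (αp - βp - η) * exp (αm - -βm - η) * exp η ^ N := by
      rw [← exp_nat_mul, ← exp_add, ← exp_add, ← exp_add]
      ring_nf
    rw [h_exp, cosh_neg]
    field

lemma hasLeadingCoeff_AF_neg :
    HasLeadingCoeff (fun z => AF N η ξ αp βp αm βm (-z)) (2 * N + 4)
      (exp (-(αp + αm - βp + βm + (N - 1) * η)) /
        (16 * 4 ^ N * (sinh αp * cosh βp) * (sinh αm * cosh βm))) := by
  simp only [AF_neg]
  convert hasLeadingCoeff_AF (-η) ξ (-αp) (-βp) (-αm) (-βm) using 2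
  · ring_nf
  · simp only [sinh_neg, cosh_neg]
    ring

end BaxterCoefficient

/-! ### The functions in `Σ_T` -/

section TransferMatrixSpectrum

variable {N : ℕ} (η : ℂ) (ξ : Fin N → ℂ) (ζp ζm κp κm τp τm αp βp αm βm : ℂ)

lemma hasLeadingCoeff_gA (a : Fin N) : HasLeadingCoeff (gA N η ξ a) (2 * N + 4) 0 := by
  have h := ((HasLeadingCoeff.cosh_two_mul_sq_sub (cosh η ^ 2)).div_const
    (cosh (2 * zeta0 N η ξ a) ^ 2 - cosh η ^ 2)).mul
    ((HasLeadingCoeff.prod_cosh_two_mul_sub (univ.erase a)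
      fun b => cosh (2 * zeta0 N η ξ b)).div_const
      (∏ b ∈ univ.erase a, (cosh (2 * zeta0 N η ξ a) - cosh (2 * zeta0 N η ξ b))))
  simp only [← Finset.prod_div_distrib] at h
  refine h.of_lt ?_
  have h_card : (#(univ.erase a) : ℝ) < N := by
    simpa using Finset.card_erase_lt_of_mem (mem_univ a)
  linarith

lemma hasLeadingCoeff_cosh_mul_prod_div (c d : ℂ) (u w : Fin N → ℂ) :
    HasLeadingCoeff
      (fun z => (cosh (2 * z) - c) / d * ∏ b, (cosh (2 * z) - u b) / w b) (2 * N + 4) 0 := by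
  have h := ((HasLeadingCoeff.cosh_two_mul_sub c).div_const d).mul
    ((HasLeadingCoeff.prod_cosh_two_mul_sub univ u).div_const (∏ b, w b))
  simp only [← Finset.prod_div_distrib] at h
  refine h.of_lt ?_
  rw [Finset.card_fin]
  linarith

lemma hasLeadingCoeff_fF :
    HasLeadingCoeff (fF N η ξ ζp ζm κp κm τp τm αp βp αm βm) (2 * N + 4)
      (κp * κm * cosh (τp - τm) / (sinh ζp * sinh ζm) / (2 * 4 ^ N)) := by
  have h_first := (hasLeadingCoeff_cosh_mul_prod_div (-cosh η) (2 * cosh η)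
    (fun b => cosh (2 * zeta0 N η ξ b))
    (fun b => cosh η - cosh (2 * zeta0 N η ξ b))).mul_const (AF N η ξ αp βp αm βm (η / 2))
  have h_second := ((hasLeadingCoeff_cosh_mul_prod_div (cosh η) (2 * cosh η)
    (fun b => cosh (2 * zeta0 N η ξ b))
    (fun b => cosh η + cosh (2 * zeta0 N η ξ b))).const_mul ((-1) ^ N)).mul_const
    (AF N η ξ αp βp αm βm (η / 2 + Real.pi * I / 2))
  have h_last := ((HasLeadingCoeff.cosh_two_mul_sq_sub (cosh η ^ 2)).mul
    (HasLeadingCoeff.prod_cosh_two_mul_sub univ fun b => cosh (2 * zeta0 N η ξ b))).const_mul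
    (2 ^ ((1 : ℤ) - N) * (κp * κm * cosh (τp - τm) / (sinh ζp * sinh ζm)))
  have h_rate : (4 : ℝ) + #(univ : Finset (Fin N)) * 2 = 2 * N + 4 := by
    rw [Finset.card_fin]
    ring
  rw [h_rate] at h_last
  convert (h_first.sub h_second).add h_last using 1
  · funext z
    simp only [fF, sub_neg_eq_add, mul_assoc]
  · have h_four : (4 : ℂ) ^ N = 2 ^ N * 2 ^ N := by rw [← mul_pow]; norm_num
    rw [zpow_sub₀ two_ne_zero, zpow_one, zpow_natCast, Finset.card_fin, h_four,
      div_pow, one_pow]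
    field

variable {η ξ ζp ζm κp κm τp τm αp βp αm βm}

lemma hasLeadingCoeff_of_mem_SigmaT {τ : ℂ → ℂ}
    (hp : sinh αp * cosh βp = sinh ζp / (2 * κp)) (hm : sinh αm * cosh βm = sinh ζm / (2 * κm))
    (hτ : τ ∈ SigmaT N η ξ ζp ζm κp κm τp τm αp βp αm βm) :
    HasLeadingCoeff τ (2 * N + 4)
      (2 * cosh (τp - τm) / (16 * 4 ^ N * (sinh αp * cosh βp) * (sinh αm * cosh βm))) := by
  obtain ⟨x, -, rfl⟩ := hτ
  have h_gA : HasLeadingCoeff (fun z => ∑ a, gA N η ξ a z * x a) (2 * N + 4) 0 := by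
    simpa using HasLeadingCoeff.sum fun a (_ : a ∈ univ) =>
      (hasLeadingCoeff_gA η ξ a).mul_const (x a)
  convert (hasLeadingCoeff_fF η ξ ζp ζm κp κm τp τm αp βp αm βm).add h_gA using 1
  rw [hp, hm]
  field

end TransferMatrixSpectrum

/-! ### Leading coefficients in the Baxter equation -/

lemma eventually_sinh_two_mul_ofReal_ne_zero : ∀ᶠ t : ℝ in atTop, sinh (2 * (t : ℂ)) ≠ 0 := by
  filter_upwards [eventually_gt_atTop 0] with t ht
  have h_pos : 0 < Real.sinh (2 * t) := Real.sinh_pos_iff.2 (by linarith)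
  exact_mod_cast h_pos.ne'

lemma leadingCoeff_eq_of_baxter {τ A D Q : ℂ → ℂ} {η T a d q : ℂ} {n R : ℝ} (hq : q ≠ 0)
    (hτ : HasLeadingCoeff τ n T) (hA : HasLeadingCoeff A n a) (hD : HasLeadingCoeff D n d)
    (hQ : ∀ c, HasLeadingCoeff (fun z => Q (z + c)) R (q * exp (R * c)))
    (h_baxter : ∀ᶠ t : ℝ in atTop, τ t * Q t = A t * Q (t - η) + D t * Q (t + η)) :
    T = a * exp (-(R * η)) + d * exp (R * η) := by
  have h_left : HasLeadingCoeff (fun z => τ z * Q z) (n + R) (T * q) := by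
    simpa using hτ.mul (hQ 0)
  have h_right := (hA.mul (hQ (-η))).add (hD.mul (hQ η))
  have h_coeff := h_left.unique h_right h_baxter
  rw [mul_neg] at h_coeff
  exact mul_right_cancel₀ hq (by linear_combination h_coeff)

lemma exists_YF_eq_of_cosh_eq {N : ℕ} {η τp τm αp βp αm βm : ℂ} {r : ℤ}
    (h : cosh (τp - τm) = cosh (αp + αm - βp + βm + (N - 1 - r) * η)) :
    ∃ (i : Fin 2) (k : ℤ), YF N η τp τm αp βp αm βm i r = 2 * Real.pi * I * k := by
  rw [← cos_mul_I, ← cos_mul_I, cos_eq_cos_iff] at h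
  obtain ⟨k, hk | hk⟩ := h
  · refine ⟨0, -k, mul_right_cancel₀ I_ne_zero ?_⟩
    simp only [YF, Fin.val_zero, pow_zero]
    push_cast
    linear_combination hk + 2 * Real.pi * k * I_sq
  · refine ⟨1, k, mul_right_cancel₀ I_ne_zero ?_⟩
    simp only [YF, Fin.val_one, pow_one]
    linear_combination -hk - 2 * Real.pi * k * I_sq

theorem statement5_general {N : ℕ} {η : ℂ} {ξ : Fin N → ℂ} {τp τm αp βp αm βm : ℂ}
    (hp : sinh αp * cosh βp ≠ 0) (hm : sinh αm * cosh βm ≠ 0) {τ : ℂ → ℂ}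
    (hτ : HasLeadingCoeff τ (2 * N + 4)
      (2 * cosh (τp - τm) / (16 * 4 ^ N * (sinh αp * cosh βp) * (sinh αm * cosh βm))))
    {ι : Type*} {S : Finset ι} {ω : ι → ℝ} (hω : Set.InjOn ω S) {y : ι → ℂ} {Q : ℂ → ℂ}
    (hQ : ∀ z, Q z = ∑ j ∈ S, y j * exp (ω j * z)) (hQ_ne : ∃ z, Q z ≠ 0)
    (h_baxter : ∀ z, sinh (2 * z) ≠ 0 →
      τ z * Q z = AF N η ξ αp βp αm βm z * Q (z - η) + AF N η ξ αp βp αm βm (-z) * Q (z + η)) :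
    ∃ i ∈ S, y i ≠ 0 ∧ cosh (τp - τm) = cosh (αp + αm - βp + βm + (N - 1 - ω i) * η) := by
  obtain ⟨z, hz⟩ := hQ_ne
  obtain ⟨j, hj, h_term⟩ := Finset.exists_ne_zero_of_sum_ne_zero (hQ z ▸ hz)
  obtain ⟨i, hi, hyi, hQ_lead⟩ :=
    exists_hasLeadingCoeff_sum_exp hω ⟨j, hj, left_ne_zero_of_mul h_term⟩
  simp only [← hQ] at hQ_lead
  have h_coeff := leadingCoeff_eq_of_baxter hyi hτ (hasLeadingCoeff_AF η ξ αp βp αm βm)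
    (hasLeadingCoeff_AF_neg η ξ αp βp αm βm) hQ_lead
    (eventually_sinh_two_mul_ofReal_ne_zero.mono fun t => h_baxter t)
  have hC : 16 * 4 ^ N * (sinh αp * cosh βp) * (sinh αm * cosh βm) ≠ 0 :=
    mul_ne_zero (mul_ne_zero (by simp) hp) hm
  rw [div_mul_eq_mul_div, div_mul_eq_mul_div, ← add_div, div_left_inj' hC, ← exp_add, ← exp_add]
    at h_coeff
  refine ⟨i, hi, hyi, mul_left_cancel₀ two_ne_zero (h_coeff.trans ?_)⟩
  rw [two_cosh]
  ring_nf

/-- Lemma 3.2 / `impossible_hom`: under the stated boundary conditions, the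
homogeneous Baxter equation has no nonzero Laurent-polynomial (in `e^λ`) solution `Q` for any
`τ` in the SOV spectrum. -/
theorem statement5
    (N : ℕ) (hN : 1 ≤ N) (η : ℂ) (ξ : Fin N → ℂ)
    (ζp ζm κp κm τp τm αp αm βp βm : ℂ)
    (hκp : κp ≠ 0) (hκm : κm ≠ 0)
    (hζp : Complex.sinh ζp ≠ 0) (hζm : Complex.sinh ζm ≠ 0)
    (hαβp : Complex.sinh αp * Complex.cosh βp ≠ 0)
    (hαβm : Complex.sinh αm * Complex.cosh βm ≠ 0)
    (hrelp1 : Complex.sinh αp * Complex.cosh βp = Complex.sinh ζp / (2 * κp))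
    (hrelp2 : Complex.cosh αp * Complex.sinh βp = Complex.cosh ζp / (2 * κp))
    (hrelm1 : Complex.sinh αm * Complex.cosh βm = Complex.sinh ζm / (2 * κm))
    (hrelm2 : Complex.cosh αm * Complex.sinh βm = Complex.cosh ζm / (2 * κm))
    (hζ1 : ∀ a : Fin N, Complex.cosh (2 * zeta0 N η ξ a) ^ 2 ≠ Complex.cosh η ^ 2)
    (hζ2 : ∀ a b : Fin N, a ≠ b →
      Complex.cosh (2 * zeta0 N η ξ a) ≠ Complex.cosh (2 * zeta0 N η ξ b))
    (hY : ∀ i : Fin 2, ∀ r : ℤ, ∀ k : ℤ,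
      YF N η τp τm αp βp αm βm (i : ℕ) r ≠ 2 * Real.pi * Complex.I * k)
    (τfun : ℂ → ℂ) (hτ : τfun ∈ SigmaT N η ξ ζp ζm κp κm τp τm αp βp αm βm) :
    ¬ ∃ (s r : ℕ) (y : ℤ → ℂ) (Q : ℂ → ℂ),
        (∀ z : ℂ, Q z = ∑ a ∈ Finset.Icc (-(s : ℤ)) (r : ℤ), y a * Complex.exp ((a : ℂ) * z)) ∧
        (∃ z : ℂ, Q z ≠ 0) ∧
        (∀ z : ℂ, Complex.sinh (2 * z) ≠ 0 →
          τfun z * Q z = AF N η ξ αp βp αm βm z * Q (z - η) +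
            AF N η ξ αp βp αm βm (-z) * Q (z + η)) := by
  rintro ⟨s, r, y, Q, hQ, hQ_ne, h_baxter⟩
  obtain ⟨a, -, -, h_cosh⟩ := statement5_general (ω := fun a : ℤ => (a : ℝ)) hαβp hαβm
    (hasLeadingCoeff_of_mem_SigmaT hrelp1 hrelm1 hτ) Int.cast_injective.injOn
    (by simpa only [ofReal_intCast] using hQ) hQ_ne h_baxter
  obtain ⟨i, k, h_Y⟩ := exists_YF_eq_of_cosh_eq (by simpa only [ofReal_intCast] using h_cosh)
  exact hY i a k h_Y

end XXZ
end
end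

section
/- The transfer matrix is an even function of the spectral parameter: T(−λ) = T(λ) for all λ ∈ ℂ (both sides being well-defined entire matrix-valued functions of λ). -/
/-!
By crossing symmetry the Lax matrix `L(u)` of a site has adjugate `-L(-u-η)`, so that `M̂(z)` is
again a bulk monodromy matrix, for the reversed chain with inhomogeneities `-ξ`. The adjugate has a
deformation `X ↦ deformedAdj η w X` (contraction with the `R`-matrix at `-w - 2η`) which, by the
Yang–Baxter equation, still reverses the dressing `X ↦ L(u) X L(v)` when `w = u + v`. The boundary
matrix satisfies `deformedAdj η (2z - η) K(z) = sinh (2z - η) K(-z)`, and dressing by one site after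
another propagates this to the double-row monodromy matrix `U(z) = M(z) K₋(z) M̂(z)`. Finally
`deformedAdj` is self-adjoint for the trace pairing and maps `K₊(-z)` to `sinh (2z - η) K₊(z)`, so
`sinh (2z - η) T(-z) = tr (K₊(-z) deformedAdj U(z)) = tr (deformedAdj K₊(-z) U(z)) =
sinh (2z - η) T(z)`. The scalar factor is nonzero on a dense set and `T` is continuous.
-/

open Complex Finset

noncomputable section

namespace XXZ

/-- the index type of the quantum space `(ℂ²)^{⊗N}` together with the auxiliary space -/
abbrev FullIdx (N : ℕ) := Fin 2 × (Fin N → Fin 2)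

/-- the trigonometric 6-vertex `R`-matrix -/
def Rmat (η : ℂ) (z : ℂ) : Matrix (Fin 2 × Fin 2) (Fin 2 × Fin 2) ℂ :=
  fun p q =>
    if p = q then (if p.1 = p.2 then Complex.sinh (z + η) else Complex.sinh z)
    else if p.1 = q.2 ∧ p.2 = q.1 then Complex.sinh η else 0

/-- the Pauli matrix `σʸ` -/
def sigmaY : Matrix (Fin 2) (Fin 2) ℂ := !![0, -Complex.I; Complex.I, 0]

/-- the Pauli matrix `σᶻ` -/
def sigmaZ : Matrix (Fin 2) (Fin 2) ℂ := !![1, 0; 0, -1]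

/-- a `2×2` matrix acting on the auxiliary space (factor `0`) -/
def auxOp (N : ℕ) (K : Matrix (Fin 2) (Fin 2) ℂ) :
    Matrix (FullIdx N) (FullIdx N) ℂ :=
  fun p q => K p.1 q.1 * (if p.2 = q.2 then 1 else 0)

/-- `R_{0n}(z)`: the `R`-matrix acting on the auxiliary space and the `n`-th site -/
def R0n (N : ℕ) (η : ℂ) (n : Fin N) (z : ℂ) :
    Matrix (FullIdx N) (FullIdx N) ℂ :=
  fun p q =>
    Rmat η z (p.1, p.2 n) (q.1, q.2 n) *
      (if ∀ m : Fin N, m ≠ n → p.2 m = q.2 m then 1 else 0)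

/-- the bulk monodromy matrix `M(λ) = R_{0N}(λ-ξ_N-η/2) ⋯ R_{01}(λ-ξ_1-η/2)` -/
def Mmono (N : ℕ) (η : ℂ) (ξ : Fin N → ℂ) (z : ℂ) :
    Matrix (FullIdx N) (FullIdx N) ℂ :=
  (List.ofFn fun k : Fin N => R0n N η k.rev (z - ξ k.rev - η / 2)).prod

/-- partial transposition in the auxiliary space (factor `0`) -/
def pt0 (N : ℕ) (A : Matrix (FullIdx N) (FullIdx N) ℂ) :
    Matrix (FullIdx N) (FullIdx N) ℂ :=
  fun p q => A (q.1, p.2) (p.1, q.2)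

/-- `M̂(λ) = (-1)^N σ⁰ʸ M(-λ)^{t₀} σ⁰ʸ` -/
def Mhat (N : ℕ) (η : ℂ) (ξ : Fin N → ℂ) (z : ℂ) :
    Matrix (FullIdx N) (FullIdx N) ℂ :=
  ((-1 : ℂ) ^ N) • (auxOp N sigmaY * pt0 N (Mmono N η ξ (-z)) * auxOp N sigmaY)

/-- the general scalar solution `K(λ; ζ, κ, τ)` of the reflection equation -/
def Kmat (η : ℂ) (z ζ κ τ : ℂ) : Matrix (Fin 2) (Fin 2) ℂ :=
  (1 / Complex.sinh ζ) •
    !![Complex.sinh (z - η / 2 + ζ), κ * Complex.exp τ * Complex.sinh (2 * z - η);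
      κ * Complex.exp (-τ) * Complex.sinh (2 * z - η), Complex.sinh (ζ - z + η / 2)]

/-- `K₋(λ) = K(λ; ζ₋, κ₋, τ₋)` -/
def Kminus (η ζm κm τm : ℂ) (z : ℂ) : Matrix (Fin 2) (Fin 2) ℂ := Kmat η z ζm κm τm

/-- `K₊(λ) = K(λ+η; ζ₊, κ₊, τ₊)` -/
def Kplus (η ζp κp τp : ℂ) (z : ℂ) : Matrix (Fin 2) (Fin 2) ℂ := Kmat η (z + η) ζp κp τp

/-- partial trace over the auxiliary space -/
def tr0 (N : ℕ) (A : Matrix (FullIdx N) (FullIdx N) ℂ) :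
    Matrix (Fin N → Fin 2) (Fin N → Fin 2) ℂ :=
  fun s t => ∑ i : Fin 2, A (i, s) (i, t)

/-- the transfer matrix `T(λ) = tr₀{K₊(λ) M(λ) K₋(λ) M̂(λ)}` -/
def Tmat (N : ℕ) (η : ℂ) (ξ : Fin N → ℂ) (ζp ζm κp κm τp τm : ℂ) (z : ℂ) :
    Matrix (Fin N → Fin 2) (Fin N → Fin 2) ℂ :=
  tr0 N (auxOp N (Kplus η ζp κp τp z) * Mmono N η ξ z *
    auxOp N (Kminus η ζm κm τm z) * Mhat N η ξ z)

section HyperbolicSine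

/-- All scalar identities below are instances of this one: it is Ptolemy's theorem for `sinh`. -/
theorem sinh_mul_sinh_add_sinh_mul_sinh (x y z : ℂ) :
    sinh x * sinh y + sinh z * sinh (x + y + z) = sinh (x + z) * sinh (y + z) := by
  simp only [sinh_add, cosh_add]
  linear_combination (-sinh x * sinh y) * cosh_sq z

theorem dense_setOf_ne_zero_of_differentiable {f : ℂ → ℂ} (hf : Differentiable ℂ f) {x : ℂ}
    (hx : f x ≠ 0) : Dense {z | f z ≠ 0} := by
  have hfa : AnalyticOnNhd ℂ f Set.univ := fun z _ ↦ hf.analyticAt z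
  rcases hfa.is_constant_or_isOpenMap with ⟨c, hc⟩ | hopen
  · have : {z | f z ≠ 0} = Set.univ := Set.eq_univ_of_forall fun z ↦ by
      rwa [Set.mem_ofPred_eq, hc z, ← hc x]
    exact this ▸ dense_univ
  · exact (dense_compl_singleton (0 : ℂ)).preimage hopen

theorem dense_setOf_sinh_two_mul_sub_ne_zero (η : ℂ) : Dense {z : ℂ | sinh (2 * z - η) ≠ 0} := by
  refine dense_setOf_ne_zero_of_differentiable (x := (1 + η) / 2) (by fun_prop) ?_
  rw [mul_div_cancel₀ _ two_ne_zero, add_sub_cancel_right]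
  rw [← ofReal_one, ← ofReal_sinh]
  exact ofReal_ne_zero.2 (Real.sinh_ne_zero.2 one_ne_zero)

end HyperbolicSine

section FormalAdjugate

/-- The formal adjugate of a `2 × 2` matrix with noncommuting entries. It is `σʸ Xᵗ σʸ`, where the
transposition permutes the entries of `X` without transposing them as operators. -/
def formalAdj {Q : Type*} [Neg Q] (X : Matrix (Fin 2) (Fin 2) Q) : Matrix (Fin 2) (Fin 2) Q :=
  !![X 1 1, -X 0 1; -X 1 0, X 0 0]

theorem formalAdj_one {Q : Type*} [Ring Q] : formalAdj (1 : Matrix (Fin 2) (Fin 2) Q) = 1 := by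
  simp [formalAdj, Matrix.one_fin_two]

theorem formalAdj_smul {S Q : Type*} [Ring Q] [Monoid S] [DistribMulAction S Q] (c : S)
    (X : Matrix (Fin 2) (Fin 2) Q) : formalAdj (c • X) = c • formalAdj X := by
  simp [formalAdj, Matrix.smul_of]

theorem formalAdj_mul {Q : Type*} [Ring Q] {X Y : Matrix (Fin 2) (Fin 2) Q}
    (h : ∀ i j k l, Commute (X i j) (Y k l)) : formalAdj (X * Y) = formalAdj Y * formalAdj X := by
  ext i j
  fin_cases i <;> fin_cases j <;>
    simp [formalAdj, Matrix.mul_apply, Fin.sum_univ_two, (h _ _ _ _).eq, add_comm]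

end FormalAdjugate

theorem commute_scalar_iff {n R : Type*} [Fintype n] [DecidableEq n] [Semiring R] {x : R}
    {X : Matrix n n R} : Commute (Matrix.scalar n x) X ↔ ∀ i j, Commute x (X i j) := by
  simp [commute_iff_eq, ← Matrix.ext_iff]

section DeformedAdjugate

variable {Q : Type*} [Ring Q] [Algebra ℂ Q]

/-- A deformation of the adjugate: at `η = 0` it is `sinh w • formalAdj`. In terms of the
`R`-matrix and the permutation `P` of two auxiliary spaces, it is
`-tr_b (R_{ab}(-w - 2η) P_{ab} (formalAdj X)_b)`. -/
def deformedAdj (η w : ℂ) (X : Matrix (Fin 2) (Fin 2) Q) : Matrix (Fin 2) (Fin 2) Q :=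
  !![sinh (w + η) • X 1 1 - sinh η • X 0 0, -sinh (w + 2 * η) • X 0 1;
    -sinh (w + 2 * η) • X 1 0, sinh (w + η) • X 0 0 - sinh η • X 1 1]

theorem deformedAdj_map_algebraMap (η w : ℂ) (K : Matrix (Fin 2) (Fin 2) ℂ) :
    deformedAdj η w (K.map (algebraMap ℂ Q)) = (deformedAdj η w K).map (algebraMap ℂ Q) := by
  ext i j
  fin_cases i <;> fin_cases j <;> simp [deformedAdj, Algebra.smul_def]

theorem deformedAdj_smul (η w c : ℂ) (X : Matrix (Fin 2) (Fin 2) Q) :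
    deformedAdj η w (c • X) = c • deformedAdj η w X := by
  simp only [deformedAdj, Matrix.smul_apply, Matrix.smul_of, Matrix.smul_cons, Matrix.smul_empty,
    smul_sub, smul_comm c]

theorem deformedAdj_formalAdj (η w : ℂ) (X : Matrix (Fin 2) (Fin 2) Q) :
    deformedAdj η w (formalAdj X) = formalAdj (deformedAdj η w X) := by
  simp [deformedAdj, formalAdj]

theorem trace_mul_deformedAdj (η w : ℂ) (X Y : Matrix (Fin 2) (Fin 2) Q) :
    (X * deformedAdj η w Y).trace = (deformedAdj η w X * Y).trace := by
  simp only [deformedAdj, Matrix.trace_fin_two, Matrix.mul_apply, Fin.sum_univ_two, Matrix.of_apply,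
    Matrix.cons_val', Matrix.cons_val_zero, Matrix.cons_val_one, Matrix.cons_val_fin_one, mul_sub,
    sub_mul, mul_smul_comm, smul_mul_assoc]
  abel

end DeformedAdjugate

section Lax

variable {Q : Type*} [Ring Q] [Algebra ℂ Q] {e : Fin 2 → Fin 2 → Q}

/-- The Lax matrix of a site: `R(u)` as a `2 × 2` matrix in the auxiliary space, whose entries are
combinations of the matrix units `e a b` of the site. -/
def lax (e : Fin 2 → Fin 2 → Q) (η u : ℂ) : Matrix (Fin 2) (Fin 2) Q :=
  !![sinh (u + η) • e 0 0 + sinh u • e 1 1, sinh η • e 1 0;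
    sinh η • e 0 1, sinh u • e 0 0 + sinh (u + η) • e 1 1]

theorem formalAdj_lax (e : Fin 2 → Fin 2 → Q) (η u : ℂ) :
    formalAdj (lax e η u) = -lax e η (-u - η) := by
  have hneg : sinh (-u - η) = -sinh (u + η) := by rw [← sinh_neg]; ring_nf
  simp [formalAdj, lax, hneg, add_comm]

theorem commute_scalar_lax {x : Q} (h : ∀ a b, Commute x (e a b)) (η u : ℂ) :
    Commute (Matrix.scalar (Fin 2) x) (lax e η u) := by
  have hsmul (c : ℂ) (a b : Fin 2) : Commute x (c • e a b) := (h a b).smul_right c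
  refine commute_scalar_iff.2 fun i j ↦ ?_
  fin_cases i <;> fin_cases j <;> simp [lax, hsmul, Commute.add_right]

/-- The analogue of `adj (A X B) = adj B * adj X * adj A`. -/
theorem deformedAdj_lax_mul_mul_lax
    (he : ∀ a b c d, e a b * e c d = if b = c then e a d else 0)
    {X : Matrix (Fin 2) (Fin 2) Q} (hX : ∀ a b, Commute (Matrix.scalar (Fin 2) (e a b)) X)
    (η u v : ℂ) :
    deformedAdj η (u + v) (lax e η u * X * lax e η v) =
      formalAdj (lax e η v) * deformedAdj η (u + v) X * formalAdj (lax e η u) := by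
  have hcomm (a b i j) : X i j * e a b = e a b * X i j :=
    (commute_scalar_iff.1 (hX a b) i j).eq.symm
  have hunit (a b c d) (Y : Q) : e a b * (e c d * Y) = if b = c then e a d * Y else 0 := by
    rw [← mul_assoc, he, ite_mul, zero_mul]
  have h₁ := sinh_mul_sinh_add_sinh_mul_sinh u v η
  have h₂ := sinh_mul_sinh_add_sinh_mul_sinh η (u + η) v
  have h₃ := sinh_mul_sinh_add_sinh_mul_sinh η (v + η) u
  rw [show η + (u + η) + v = u + v + 2 * η by ring, show η + v = v + η by ring,
    show u + η + v = u + v + η by ring] at h₂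
  rw [show η + (v + η) + u = u + v + 2 * η by ring, show η + u = u + η by ring,
    show v + η + u = u + v + η by ring] at h₃
  ext i j
  fin_cases i <;> fin_cases j <;>
    simp only [deformedAdj, lax, formalAdj, Matrix.mul_apply, Matrix.of_apply, Matrix.cons_val',
      Matrix.cons_val_fin_one, Matrix.cons_val_zero, Matrix.cons_val_one, Fin.sum_univ_two,
      Fin.isValue, Fin.zero_eta, Fin.mk_one, Algebra.smul_mul_assoc, Algebra.mul_smul_comm, add_mul,
      mul_add, sub_mul, mul_sub, neg_mul, mul_neg, mul_assoc, hcomm, hunit, ↓reduceIte, zero_ne_one,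
      one_ne_zero, smul_zero]
  · linear_combination (norm := module) (sinh η * h₁) • (e 0 0 * X 0 0 - e 1 1 * X 0 0)
      - (sinh η * h₂) • (e 0 1 * X 0 1) - (sinh η * h₃) • (e 1 0 * X 1 0)
  · linear_combination (norm := module)
      -(sinh η * h₂) • (e 1 0 * X 1 1) - (sinh η * h₃) • (e 1 0 * X 0 0)
  · linear_combination (norm := module)
      -(sinh η * h₂) • (e 0 1 * X 0 0) - (sinh η * h₃) • (e 0 1 * X 1 1)
  · linear_combination (norm := module) (sinh η * h₁) • (e 1 1 * X 1 1 - e 0 0 * X 1 1)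
      - (sinh η * h₂) • (e 1 0 * X 1 0) - (sinh η * h₃) • (e 0 1 * X 0 1)

end Lax

section DoubleRow

variable {ι Q : Type*} [Ring Q] [Algebra ℂ Q] {e : ι → Fin 2 → Fin 2 → Q}

/-- The bulk monodromy matrix of the chain whose sites are listed in `l`, the leftmost factor
belonging to the head of `l`. -/
def monodromy (e : ι → Fin 2 → Fin 2 → Q) (η : ℂ) (ξ : ι → ℂ) (l : List ι) (z : ℂ) :
    Matrix (Fin 2) (Fin 2) Q :=
  (l.map fun n ↦ lax (e n) η (z - ξ n - η / 2)).prod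

theorem monodromy_cons (e : ι → Fin 2 → Fin 2 → Q) (η : ℂ) (ξ : ι → ℂ) (n : ι) (l : List ι)
    (z : ℂ) : monodromy e η ξ (n :: l) z =
      lax (e n) η (z - ξ n - η / 2) * monodromy e η ξ l z :=
  List.prod_cons

theorem monodromy_append_singleton (e : ι → Fin 2 → Fin 2 → Q) (η : ℂ) (ξ : ι → ℂ) (l : List ι)
    (n : ι) (z : ℂ) : monodromy e η ξ (l ++ [n]) z =
      monodromy e η ξ l z * lax (e n) η (z - ξ n - η / 2) := by
  simp [monodromy]

theorem commute_scalar_monodromy {x : Q} {l : List ι} (h : ∀ n ∈ l, ∀ a b, Commute x (e n a b))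
    (η : ℂ) (ξ : ι → ℂ) (z : ℂ) : Commute (Matrix.scalar (Fin 2) x) (monodromy e η ξ l z) :=
  Commute.list_prod_right _ _ <| List.forall_mem_map.2 fun n hn ↦ commute_scalar_lax (h n hn) _ _

theorem formalAdj_monodromy (hc : ∀ n m, n ≠ m → ∀ a b c d, Commute (e n a b) (e m c d))
    (η : ℂ) (ξ : ι → ℂ) {l : List ι} (hl : l.Nodup) (z : ℂ) :
    formalAdj (monodromy e η ξ l (-z)) =
      (-1 : ℂ) ^ l.length • monodromy e η (-ξ) l.reverse z := by
  induction l with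
  | nil => simp [monodromy, formalAdj_one]
  | cons n l ih =>
    obtain ⟨hn, hl⟩ := List.nodup_cons.1 hl
    have hcomm (i j k m) : Commute (lax (e n) η (-z - ξ n - η / 2) i j)
        (monodromy e η ξ l (-z) k m) := by
      refine commute_scalar_iff.1 (commute_scalar_monodromy (fun p hp a b ↦ ?_) η ξ (-z)) k m
      exact (commute_scalar_iff.1 (commute_scalar_lax (fun c d ↦
        hc p n (ne_of_mem_of_not_mem hp hn) a b c d) _ _) i j).symm
    have hparam : -(-z - ξ n - η / 2) - η = z - (-ξ) n - η / 2 := by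
      rw [Pi.neg_apply]; ring
    rw [monodromy_cons, formalAdj_mul hcomm, ih hl, formalAdj_lax, hparam, List.reverse_cons,
      monodromy_append_singleton, List.length_cons, pow_succ]
    simp

/-- Sklyanin's double-row monodromy matrix `M(z) K(z) M̂(z)`. The sign in the definition of `M̂` is
absorbed by writing `M̂` as a monodromy matrix for the reversed chain with inhomogeneities `-ξ`. -/
def doubleRow (e : ι → Fin 2 → Fin 2 → Q) (η : ℂ) (ξ : ι → ℂ) (K : ℂ → Matrix (Fin 2) (Fin 2) Q)
    (l : List ι) (z : ℂ) : Matrix (Fin 2) (Fin 2) Q :=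
  monodromy e η ξ l z * K z * monodromy e η (-ξ) l.reverse z

theorem doubleRow_nil (e : ι → Fin 2 → Fin 2 → Q) (η : ℂ) (ξ : ι → ℂ)
    (K : ℂ → Matrix (Fin 2) (Fin 2) Q) (z : ℂ) : doubleRow e η ξ K [] z = K z := by
  simp [doubleRow, monodromy]

theorem doubleRow_cons (e : ι → Fin 2 → Fin 2 → Q) (η : ℂ) (ξ : ι → ℂ)
    (K : ℂ → Matrix (Fin 2) (Fin 2) Q) (n : ι) (l : List ι) (z : ℂ) :
    doubleRow e η ξ K (n :: l) z = lax (e n) η (z - ξ n - η / 2) * doubleRow e η ξ K l z *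
      lax (e n) η (z + ξ n - η / 2) := by
  simp only [doubleRow, List.reverse_cons, monodromy_cons, monodromy_append_singleton, mul_assoc,
    Pi.neg_apply, sub_neg_eq_add]

theorem commute_scalar_doubleRow {x : Q} {l : List ι} {K : ℂ → Matrix (Fin 2) (Fin 2) Q} {z : ℂ}
    (h : ∀ n ∈ l, ∀ a b, Commute x (e n a b)) (hK : Commute (Matrix.scalar (Fin 2) x) (K z))
    (η : ℂ) (ξ : ι → ℂ) : Commute (Matrix.scalar (Fin 2) x) (doubleRow e η ξ K l z) :=
  ((commute_scalar_monodromy h η ξ z).mul_right hK).mul_right <|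
    commute_scalar_monodromy (fun n hn ↦ h n (List.mem_reverse.1 hn)) η (-ξ) z

theorem deformedAdj_doubleRow (he : ∀ n a b c d, e n a b * e n c d = if b = c then e n a d else 0)
    (hc : ∀ n m, n ≠ m → ∀ a b c d, Commute (e n a b) (e m c d)) (η : ℂ) (ξ : ι → ℂ)
    {K : ℂ → Matrix (Fin 2) (Fin 2) Q} {z : ℂ}
    (hcK : ∀ n a b, Commute (Matrix.scalar (Fin 2) (e n a b)) (K z))
    (hK : deformedAdj η (2 * z - η) (K z) = sinh (2 * z - η) • K (-z))
    {l : List ι} (hl : l.Nodup) :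
    deformedAdj η (2 * z - η) (doubleRow e η ξ K l z) =
      sinh (2 * z - η) • doubleRow e η ξ K l (-z) := by
  induction l with
  | nil => simpa only [doubleRow_nil] using hK
  | cons n l ih =>
    obtain ⟨hn, hl⟩ := List.nodup_cons.1 hl
    have hcomm (a b) : Commute (Matrix.scalar (Fin 2) (e n a b)) (doubleRow e η ξ K l z) :=
      commute_scalar_doubleRow (fun m hm ↦ hc n m (ne_of_mem_of_not_mem hm hn).symm a b)
        (hcK n a b) η ξ
    have hw : 2 * z - η = (z - ξ n - η / 2) + (z + ξ n - η / 2) := by ring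
    have hleft : -(z + ξ n - η / 2) - η = -z - ξ n - η / 2 := by ring
    have hright : -(z - ξ n - η / 2) - η = -z + ξ n - η / 2 := by ring
    calc deformedAdj η (2 * z - η) (doubleRow e η ξ K (n :: l) z)
      _ = formalAdj (lax (e n) η (z + ξ n - η / 2)) *
            deformedAdj η (2 * z - η) (doubleRow e η ξ K l z) *
            formalAdj (lax (e n) η (z - ξ n - η / 2)) := by
        rw [doubleRow_cons, hw, deformedAdj_lax_mul_mul_lax (he n) hcomm]
      _ = lax (e n) η (-z - ξ n - η / 2) * (sinh (2 * z - η) • doubleRow e η ξ K l (-z)) *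
            lax (e n) η (-z + ξ n - η / 2) := by
        rw [ih hl, formalAdj_lax, formalAdj_lax, hleft, hright, neg_mul, neg_mul_neg]
      _ = sinh (2 * z - η) • doubleRow e η ξ K (n :: l) (-z) := by
        rw [doubleRow_cons, mul_smul_comm, smul_mul_assoc]

end DoubleRow

section BoundaryMatrices

variable (η ζ κ τ z : ℂ)

theorem formalAdj_Kmat : formalAdj (Kmat η z ζ κ τ) = Kmat η (η - z) ζ κ τ := by
  have hoff : sinh (2 * (η - z) - η) = -sinh (2 * z - η) := by rw [← sinh_neg]; ring_nf
  have h₀ : η - z - η / 2 + ζ = ζ - z + η / 2 := by ring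
  have h₁ : ζ - (η - z) + η / 2 = z - η / 2 + ζ := by ring
  rw [Kmat, formalAdj_smul, Kmat, hoff, h₀, h₁]
  simp [formalAdj]

theorem deformedAdj_Kmat :
    deformedAdj η (2 * z - η) (Kmat η z ζ κ τ) = sinh (2 * z - η) • Kmat η (-z) ζ κ τ := by
  have hdiag₀ : sinh (2 * z) * sinh (ζ - z + η / 2) - sinh η * sinh (z - η / 2 + ζ) =
      sinh (2 * z - η) * sinh (-z - η / 2 + ζ) := by
    have h := sinh_mul_sinh_add_sinh_mul_sinh (-η) (z - η / 2 + ζ) (-(2 * z - η))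
    rw [show -η + (z - η / 2 + ζ) + -(2 * z - η) = -z - η / 2 + ζ by ring,
      show -η + -(2 * z - η) = -(2 * z) by ring,
      show z - η / 2 + ζ + -(2 * z - η) = ζ - z + η / 2 by ring] at h
    simp only [sinh_neg] at h
    linear_combination h
  have hdiag₁ : sinh (2 * z) * sinh (z - η / 2 + ζ) - sinh η * sinh (ζ - z + η / 2) =
      sinh (2 * z - η) * sinh (ζ - -z + η / 2) := by
    have h := sinh_mul_sinh_add_sinh_mul_sinh η (ζ - z + η / 2) (2 * z - η)
    rw [show η + (ζ - z + η / 2) + (2 * z - η) = ζ - -z + η / 2 by ring,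
      show η + (2 * z - η) = 2 * z by ring,
      show ζ - z + η / 2 + (2 * z - η) = z - η / 2 + ζ by ring] at h
    linear_combination -h
  have hoff : sinh (2 * -z - η) = -sinh (2 * z + η) := by rw [← sinh_neg]; ring_nf
  have hw₁ : 2 * z - η + η = 2 * z := by ring
  have hw₂ : 2 * z - η + 2 * η = 2 * z + η := by ring
  rw [Kmat, Kmat, deformedAdj_smul, smul_comm, deformedAdj, hw₁, hw₂, hoff]
  congr 1
  ext i j
  fin_cases i <;> fin_cases j
  · simpa using hdiag₀
  · simp; ring
  · simp; ring
  · simpa using hdiag₁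

theorem deformedAdj_Kplus_neg :
    deformedAdj η (2 * z - η) (Kplus η ζ κ τ (-z)) = sinh (2 * z - η) • Kplus η ζ κ τ z := by
  have hadj : Kplus η ζ κ τ (-z) = formalAdj (Kmat η z ζ κ τ) := by
    rw [formalAdj_Kmat, Kplus, neg_add_eq_sub]
  rw [hadj, deformedAdj_formalAdj, deformedAdj_Kmat, formalAdj_smul, formalAdj_Kmat, Kplus,
    sub_neg_eq_add, add_comm η z]

end BoundaryMatrices

section TransferMatrix

variable {ι Q : Type*} [Ring Q] [Algebra ℂ Q] {e : ι → Fin 2 → Fin 2 → Q}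

theorem sinh_smul_trace_Kplus_mul_doubleRow_neg
    (he : ∀ n a b c d, e n a b * e n c d = if b = c then e n a d else 0)
    (hc : ∀ n m, n ≠ m → ∀ a b c d, Commute (e n a b) (e m c d)) (η : ℂ) (ξ : ι → ℂ)
    {l : List ι} (hl : l.Nodup) (ζp ζm κp κm τp τm z : ℂ) :
    sinh (2 * z - η) • ((Kplus η ζp κp τp (-z)).map (algebraMap ℂ Q) *
      doubleRow e η ξ (fun w ↦ (Kminus η ζm κm τm w).map (algebraMap ℂ Q)) l (-z)).trace =
    sinh (2 * z - η) • ((Kplus η ζp κp τp z).map (algebraMap ℂ Q) *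
      doubleRow e η ξ (fun w ↦ (Kminus η ζm κm τm w).map (algebraMap ℂ Q)) l z).trace := by
  set Kp : ℂ → Matrix (Fin 2) (Fin 2) Q := fun w ↦ (Kplus η ζp κp τp w).map (algebraMap ℂ Q)
  set Km : ℂ → Matrix (Fin 2) (Fin 2) Q := fun w ↦ (Kminus η ζm κm τm w).map (algebraMap ℂ Q)
  have hmap (c : ℂ) (K : Matrix (Fin 2) (Fin 2) ℂ) :
      (c • K).map (algebraMap ℂ Q) = c • K.map (algebraMap ℂ Q) :=
    Matrix.map_smul _ c (fun _ ↦ by simp [Algebra.smul_def]) K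
  have hKp : deformedAdj η (2 * z - η) (Kp (-z)) = sinh (2 * z - η) • Kp z := by
    simp only [Kp, deformedAdj_map_algebraMap, deformedAdj_Kplus_neg, hmap]
  have hKm : deformedAdj η (2 * z - η) (Km z) = sinh (2 * z - η) • Km (-z) := by
    simp only [Km, Kminus, deformedAdj_map_algebraMap, deformedAdj_Kmat, hmap]
  have hU := deformedAdj_doubleRow he hc η ξ
    (fun _ _ _ ↦ commute_scalar_iff.2 fun _ _ ↦ Algebra.commute_algebraMap_right _ _) hKm hl
  calc sinh (2 * z - η) • (Kp (-z) * doubleRow e η ξ Km l (-z)).trace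
    _ = (Kp (-z) * deformedAdj η (2 * z - η) (doubleRow e η ξ Km l z)).trace := by
      rw [hU, mul_smul_comm, Matrix.trace_smul]
    _ = (deformedAdj η (2 * z - η) (Kp (-z)) * doubleRow e η ξ Km l z).trace :=
      trace_mul_deformedAdj ..
    _ = sinh (2 * z - η) • (Kp z * doubleRow e η ξ Km l z).trace := by
      rw [hKp, smul_mul_assoc, Matrix.trace_smul]

end TransferMatrix

section SiteOperators

variable {ι d : Type*} [DecidableEq ι] [Fintype ι] [DecidableEq d]

/-- The operator on a chain with local space `ℂ^d` that acts on the `n`-th site as the matrix unit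
`E_{ab}` and trivially on the other sites. -/
def siteUnit (n : ι) (a b : d) : Matrix (ι → d) (ι → d) ℂ :=
  fun s t ↦ if s n = a ∧ t = Function.update s n b then 1 else 0

theorem siteUnit_apply_update (n : ι) (a b : d) (s : ι → d) (c : d) :
    siteUnit n a b s (Function.update s n c) = if s n = a ∧ c = b then 1 else 0 := by
  simp [siteUnit, (Function.update_injective s n).eq_iff]

theorem siteUnit_mul_apply [Fintype d] (n : ι) (a b : d) (A : Matrix (ι → d) (ι → d) ℂ)
    (s t : ι → d) :
    (siteUnit n a b * A) s t = if s n = a then A (Function.update s n b) t else 0 := by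
  simp [Matrix.mul_apply, siteUnit, ite_and]

theorem siteUnit_mul_siteUnit [Fintype d] (n : ι) (a b a' b' : d) :
    siteUnit n a b * siteUnit n a' b' = if b = a' then siteUnit n a b' else 0 := by
  ext s t
  rw [siteUnit_mul_apply]
  by_cases hb : b = a' <;> simp [siteUnit, hb, ite_and]

theorem commute_siteUnit [Fintype d] {n m : ι} (hnm : n ≠ m) (a b a' b' : d) :
    Commute (siteUnit n a b) (siteUnit m a' b') := by
  ext s t
  simp only [siteUnit_mul_apply, siteUnit, Function.update_of_ne hnm,
    Function.update_of_ne hnm.symm, Function.update_comm hnm, ite_and]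
  split_ifs <;> rfl

end SiteOperators

section AuxiliaryBlocks

variable {N : ℕ}

/-- An operator on auxiliary ⊗ quantum space, viewed as a `2 × 2` matrix of operators on the quantum
space. -/
def auxBlocks (N : ℕ) : Matrix (FullIdx N) (FullIdx N) ℂ ≃ₐ[ℂ]
    Matrix (Fin 2) (Fin 2) (Matrix (Fin N → Fin 2) (Fin N → Fin 2) ℂ) :=
  (Matrix.compAlgEquiv (Fin 2) (Fin N → Fin 2) ℂ ℂ).symm

theorem auxBlocks_apply (A : Matrix (FullIdx N) (FullIdx N) ℂ) (i j : Fin 2)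
    (s t : Fin N → Fin 2) : auxBlocks N A i j s t = A (i, s) (j, t) :=
  rfl

theorem tr0_eq_trace_auxBlocks (A : Matrix (FullIdx N) (FullIdx N) ℂ) :
    tr0 N A = (auxBlocks N A).trace := by
  ext s t
  simp [tr0, Matrix.trace_fin_two, auxBlocks_apply]

theorem auxBlocks_auxOp (K : Matrix (Fin 2) (Fin 2) ℂ) :
    auxBlocks N (auxOp N K) = K.map (algebraMap ℂ _) := by
  ext i j s t
  simp [auxBlocks_apply, auxOp, Matrix.algebraMap_matrix_apply]

theorem auxBlocks_sigmaY_mul_pt0_mul_sigmaY (A : Matrix (FullIdx N) (FullIdx N) ℂ) :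
    auxBlocks N (auxOp N sigmaY * pt0 N A * auxOp N sigmaY) = formalAdj (auxBlocks N A) := by
  have hpt (i j : Fin 2) : auxBlocks N (pt0 N A) i j = auxBlocks N A j i := rfl
  rw [map_mul, map_mul, auxBlocks_auxOp]
  refine Matrix.ext fun i j ↦ ?_
  fin_cases i <;> fin_cases j <;>
    simp [Matrix.mul_apply, Fin.sum_univ_two, hpt, formalAdj, sigmaY,
      Algebra.algebraMap_eq_smul_one, smul_smul]

theorem auxBlocks_R0n (η : ℂ) (n : Fin N) (u : ℂ) :
    auxBlocks N (R0n N η n u) = lax (siteUnit n) η u := by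
  ext i j s t
  rw [auxBlocks_apply]
  by_cases hst : ∀ m, m ≠ n → s m = t m
  · obtain ⟨b, rfl⟩ : ∃ b, t = Function.update s n b :=
      ⟨t n, Function.eq_update_iff.2 ⟨rfl, fun m hm ↦ (hst m hm).symm⟩⟩
    simp only [R0n, if_pos hst, Function.update_self, mul_one]
    generalize hsn : s n = a
    fin_cases a <;> fin_cases b <;> fin_cases i <;> fin_cases j <;>
      simp [Rmat, lax, siteUnit_apply_update, hsn]
  · have hunit (a b : Fin 2) : siteUnit n a b s t = 0 :=
      if_neg fun h ↦ hst fun m hm ↦ by rw [h.2, Function.update_of_ne hm]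
    simp only [R0n, if_neg hst, mul_zero]
    fin_cases i <;> fin_cases j <;> simp [lax, hunit]

theorem auxBlocks_Mmono (η : ℂ) (ξ : Fin N → ℂ) (z : ℂ) :
    auxBlocks N (Mmono N η ξ z) = monodromy siteUnit η ξ (List.ofFn Fin.rev) z := by
  simp only [Mmono, monodromy, map_list_prod, List.map_ofFn, Function.comp_def, auxBlocks_R0n]

theorem auxBlocks_Mhat (η : ℂ) (ξ : Fin N → ℂ) (z : ℂ) :
    auxBlocks N (Mhat N η ξ z) = monodromy siteUnit η (-ξ) (List.ofFn Fin.rev).reverse z := by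
  rw [Mhat, map_smul, auxBlocks_sigmaY_mul_pt0_mul_sigmaY, auxBlocks_Mmono,
    formalAdj_monodromy (fun _ _ ↦ commute_siteUnit) _ _ (List.nodup_ofFn.2 Fin.rev_injective),
    smul_smul, List.length_ofFn, ← mul_pow, neg_mul_neg, one_mul, one_pow, one_smul]

theorem Tmat_eq_trace (η : ℂ) (ξ : Fin N → ℂ) (ζp ζm κp κm τp τm z : ℂ) :
    Tmat N η ξ ζp ζm κp κm τp τm z =
      ((Kplus η ζp κp τp z).map (algebraMap ℂ _) *
        doubleRow siteUnit η ξ (fun w ↦ (Kminus η ζm κm τm w).map (algebraMap ℂ _))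
          (List.ofFn Fin.rev) z).trace := by
  simp only [Tmat, tr0_eq_trace_auxBlocks, map_mul, auxBlocks_auxOp, auxBlocks_Mmono,
    auxBlocks_Mhat, doubleRow, mul_assoc]

end AuxiliaryBlocks

section Continuity

theorem continuous_Kmat (η ζ κ τ : ℂ) : Continuous fun z ↦ Kmat η z ζ κ τ := by
  refine continuous_matrix fun i j ↦ ?_
  fin_cases i <;> fin_cases j <;> simp only [Kmat] <;> fun_prop

theorem continuous_auxOp (N : ℕ) : Continuous (auxOp N) :=
  continuous_matrix fun p q ↦ (continuous_id.matrix_elem p.1 q.1).mul continuous_const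

theorem continuous_pt0 (N : ℕ) : Continuous (pt0 N) :=
  continuous_matrix fun p q ↦ continuous_id.matrix_elem (q.1, p.2) (p.1, q.2)

theorem continuous_tr0 (N : ℕ) : Continuous (tr0 N) :=
  continuous_matrix fun s t ↦
    continuous_finsetSum _ fun i _ ↦ continuous_id.matrix_elem (i, s) (i, t)

variable (N : ℕ) (η : ℂ) (ξ : Fin N → ℂ)

theorem continuous_R0n (n : Fin N) : Continuous (R0n N η n) := by
  refine continuous_matrix fun p q ↦ ?_
  simp only [R0n, Rmat]
  split_ifs <;> fun_prop

theorem continuous_Mmono : Continuous (Mmono N η ξ) := by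
  unfold Mmono
  simp only [List.ofFn_eq_map]
  exact continuous_list_prod _ fun k _ ↦ (continuous_R0n N η k.rev).comp (by fun_prop)

theorem continuous_Mhat : Continuous (Mhat N η ξ) :=
  have hpt : Continuous fun z ↦ pt0 N (Mmono N η ξ (-z)) :=
    (continuous_pt0 N).comp ((continuous_Mmono N η ξ).comp continuous_neg)
  ((continuous_const.matrix_mul hpt).matrix_mul continuous_const).const_smul ((-1 : ℂ) ^ N)

theorem continuous_Tmat (ζp ζm κp κm τp τm : ℂ) :
    Continuous (Tmat N η ξ ζp ζm κp κm τp τm) :=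
  have hKp : Continuous fun z ↦ auxOp N (Kplus η ζp κp τp z) :=
    (continuous_auxOp N).comp <| (continuous_Kmat η ζp κp τp).comp (continuous_add_const η)
  have hKm : Continuous fun z ↦ auxOp N (Kminus η ζm κm τm z) :=
    (continuous_auxOp N).comp (continuous_Kmat η ζm κm τm)
  (continuous_tr0 N).comp <| ((hKp.matrix_mul (continuous_Mmono N η ξ)).matrix_mul hKm).matrix_mul
    (continuous_Mhat N η ξ)

end Continuity

theorem sinh_smul_Tmat_neg (N : ℕ) (η : ℂ) (ξ : Fin N → ℂ) (ζp ζm κp κm τp τm z : ℂ) :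
    sinh (2 * z - η) • Tmat N η ξ ζp ζm κp κm τp τm (-z) =
      sinh (2 * z - η) • Tmat N η ξ ζp ζm κp κm τp τm z := by
  simp only [Tmat_eq_trace]
  exact sinh_smul_trace_Kplus_mul_doubleRow_neg siteUnit_mul_siteUnit
    (fun _ _ ↦ commute_siteUnit) η ξ (List.nodup_ofFn.2 Fin.rev_injective) ζp ζm κp κm τp τm z

/-- part of Proposition 2.1: the transfer matrix is an even function of the
spectral parameter. -/
theorem statement12
    (N : ℕ) (hN : 1 ≤ N) (η : ℂ) (ξ : Fin N → ℂ)
    (ζp ζm κp κm τp τm : ℂ)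
    (hζp : Complex.sinh ζp ≠ 0) (hζm : Complex.sinh ζm ≠ 0) (z : ℂ) :
    Tmat N η ξ ζp ζm κp κm τp τm (-z) = Tmat N η ξ ζp ζm κp κm τp τm z := by
  have hT := continuous_Tmat N η ξ ζp ζm κp κm τp τm
  have heven : Set.EqOn (fun w ↦ Tmat N η ξ ζp ζm κp κm τp τm (-w))
      (Tmat N η ξ ζp ζm κp κm τp τm) {w | sinh (2 * w - η) ≠ 0} := fun w hw ↦
    smul_right_injective _ hw (sinh_smul_Tmat_neg N η ξ ζp ζm κp κm τp τm w)
  exact congrFun ((hT.comp continuous_neg).ext_on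
    (dense_setOf_sinh_two_mul_sub_ne_zero η) hT heven) z

end XXZ
end
end

section
/- Write T(λ | τ₊, ζ₊, κ₊, τ₋, ζ₋, κ₋) for the transfer matrix to display its dependence on the boundary parameters, and set Γ_y = σ^y ⊗ σ^y ⊗ ⋯ ⊗ σ^y and Γ_z = σ^z ⊗ σ^z ⊗ ⋯ ⊗ σ^z (N factors) acting on (ℂ²)^{⊗N}. Then for all λ ∈ ℂ: T(λ | −τ₊, −ζ₊, κ₊, −τ₋, −ζ₋, κ₋) = Γ_y · T(λ | τ₊, ζ₊, κ₊, τ₋, ζ₋, κ₋) · Γ_y and T(λ | τ₊, ζ₊, −κ₊, τ₋, ζ₋, −κ₋) = Γ_z · T(λ | τ₊, ζ₊, κ₊, τ₋, ζ₋, κ₋) · Γ_z; in particular these transfer matrices are isospectral. -/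
/-!
Let `G` be an invertible `2×2` matrix such that `G ⊗ G` commutes with the six-vertex `R`-matrix, and
let `Γ` be its `N`-th tensor power. Then `G ⊗ Γ` commutes with every `R₀ₙ`, hence with the
monodromy matrix `M`. Partial transposition turns this into commutation of `(adj G)ᵀ ⊗ Γ` with
`M^{t₀}`, and since `σʸ (adj G)ᵀ = G σʸ` for every `2×2` matrix, `G ⊗ Γ` commutes with `M̂` as well.
So only the boundary matrices feel the conjugation by `G ⊗ Γ`, and cyclicity of the partial trace
turns it into conjugation of the transfer matrix by `Γ`. The `R`-matrix is a combination of the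
identity, `σᶻ ⊗ σᶻ` and the exchange of the two factors, so `G = σʸ` and `G = σᶻ` both qualify.
-/

open Complex Finset

noncomputable section

namespace XXZ

/-- `Γ_y = σʸ ⊗ ⋯ ⊗ σʸ` -/
def GammaY (N : ℕ) : Matrix (Fin N → Fin 2) (Fin N → Fin 2) ℂ :=
  fun s t => ∏ n : Fin N, sigmaY (s n) (t n)

/-- `Γ_z = σᶻ ⊗ ⋯ ⊗ σᶻ` -/
def GammaZ (N : ℕ) : Matrix (Fin N → Fin 2) (Fin N → Fin 2) ℂ :=
  fun s t => ∏ n : Fin N, sigmaZ (s n) (t n)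

section TensorPower

open scoped Kronecker

variable {ι m R : Type*} [CommSemiring R]

/-- The tensor power `A ⊗ ⋯ ⊗ A` of a matrix, one factor for each element of `ι`, with rows and
columns indexed by the configurations `ι → m`. -/
def tensorPower (ι : Type*) [Fintype ι] (A : Matrix m m R) : Matrix (ι → m) (ι → m) R :=
  Matrix.of fun s t => ∏ n, A (s n) (t n)

lemma tensorPower_one [Fintype ι] [DecidableEq m] [DecidableEq (ι → m)] :
    tensorPower ι (1 : Matrix m m R) = 1 := by
  ext s t
  simp only [tensorPower, Matrix.of_apply, Matrix.one_apply, Fintype.prod_ite_zero, prod_const_one,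
    funext_iff]

lemma tensorPower_mul [Fintype ι] [DecidableEq ι] [Fintype m] (A B : Matrix m m R) :
    tensorPower ι (A * B) = tensorPower ι A * tensorPower ι B := by
  ext s t
  simp only [tensorPower, Matrix.of_apply, Matrix.mul_apply, ← prod_mul_distrib]
  exact Fintype.prod_sum fun n a => A (s n) a * B a (t n)

lemma eq_conj_of_semiconjBy_tensorPower [Fintype ι] [DecidableEq ι] [Fintype m] [DecidableEq m]
    {G : Matrix m m R} (hG : G * G = 1) {T T' : Matrix (ι → m) (ι → m) R}
    (h : SemiconjBy (tensorPower ι G) T T') : T' = tensorPower ι G * T * tensorPower ι G := by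
  rw [h.eq, mul_assoc, ← tensorPower_mul, hG, tensorPower_one, mul_one]

lemma semiconjBy_kronecker {n : Type*} [Fintype m] [Fintype n] {A X X' : Matrix m m R}
    {B Y Y' : Matrix n n R} (hX : SemiconjBy A X X') (hY : SemiconjBy B Y Y') :
    SemiconjBy (A ⊗ₖ B) (X ⊗ₖ Y) (X' ⊗ₖ Y') := by
  rw [SemiconjBy, ← Matrix.mul_kronecker_mul, ← Matrix.mul_kronecker_mul, hX.eq, hY.eq]

lemma commute_kronecker_self_prodComm [Fintype m] [DecidableEq m] (A : Matrix m m R) :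
    Commute (A ⊗ₖ A) (Equiv.prodComm m m).toPEquiv.toMatrix := by
  rw [Commute, SemiconjBy, PEquiv.mul_toMatrix_toPEquiv, PEquiv.toMatrix_toPEquiv_mul]
  ext ⟨i, a⟩ ⟨j, b⟩
  exact mul_comm _ _

end TensorPower

section Auxiliary

open scoped Kronecker Matrix

variable {N : ℕ}

lemma auxOp_eq_kronecker (K : Matrix (Fin 2) (Fin 2) ℂ) : auxOp N K = K ⊗ₖ 1 := by
  ext p q
  simp only [auxOp, Matrix.one_apply, Matrix.kroneckerMap_apply]

lemma semiconjBy_kronecker_auxOp {G K K' : Matrix (Fin 2) (Fin 2) ℂ}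
    (X : Matrix (Fin N → Fin 2) (Fin N → Fin 2) ℂ) (h : SemiconjBy G K K') :
    SemiconjBy (G ⊗ₖ X) (auxOp N K) (auxOp N K') := by
  rw [auxOp_eq_kronecker, auxOp_eq_kronecker]
  exact semiconjBy_kronecker h (SemiconjBy.one_right X)

lemma semiconjBy_auxOp_kronecker {G G' K : Matrix (Fin 2) (Fin 2) ℂ}
    (X : Matrix (Fin N → Fin 2) (Fin N → Fin 2) ℂ) (h : SemiconjBy K G G') :
    SemiconjBy (auxOp N K) (G ⊗ₖ X) (G' ⊗ₖ X) := by
  rw [auxOp_eq_kronecker]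
  exact semiconjBy_kronecker h (SemiconjBy.one_left X)

lemma pt0_kronecker_mul_mul_kronecker (G H : Matrix (Fin 2) (Fin 2) ℂ)
    (X Y : Matrix (Fin N → Fin 2) (Fin N → Fin 2) ℂ) (A : Matrix (FullIdx N) (FullIdx N) ℂ) :
    pt0 N ((G ⊗ₖ X) * A * (H ⊗ₖ Y)) = (Hᵀ ⊗ₖ X) * pt0 N A * (Gᵀ ⊗ₖ Y) := by
  ext ⟨i, s⟩ ⟨j, t⟩
  simp only [pt0, Matrix.mul_apply, Matrix.kroneckerMap_apply, Matrix.transpose_apply,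
    Fintype.sum_prod_type_right, sum_mul]
  refine sum_congr rfl fun u _ => ?_
  rw [sum_comm]
  conv_rhs => rw [sum_comm]
  refine sum_congr rfl fun v _ => ?_
  rw [sum_comm]
  exact sum_congr rfl fun k _ => sum_congr rfl fun l _ => by ring

/-- Moving the auxiliary part `G` of the intertwiner to the other side, as `adj G`, leaves
`1 ⊗ X` and `adj G ⊗ 1` on opposite sides of `A`, and these survive the partial transposition. -/
lemma semiconjBy_pt0 {G : Matrix (Fin 2) (Fin 2) ℂ} (hG : G.det ≠ 0)
    {X : Matrix (Fin N → Fin 2) (Fin N → Fin 2) ℂ} {A A' : Matrix (FullIdx N) (FullIdx N) ℂ}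
    (h : SemiconjBy (G ⊗ₖ X) A A') :
    SemiconjBy (G.adjugateᵀ ⊗ₖ X) (pt0 N A) (pt0 N A') := by
  have hleft : (G.adjugate ⊗ₖ 1) * (G ⊗ₖ X) = G.det • (1 ⊗ₖ X) := by
    rw [← Matrix.mul_kronecker_mul, Matrix.adjugate_mul, one_mul, Matrix.smul_kronecker]
  have hright : (G ⊗ₖ X) * (G.adjugate ⊗ₖ 1) = G.det • (1 ⊗ₖ X) := by
    rw [← Matrix.mul_kronecker_mul, Matrix.mul_adjugate, mul_one, Matrix.smul_kronecker]
  have hcross : (1 ⊗ₖ X) * A * (G.adjugate ⊗ₖ 1) = (G.adjugate ⊗ₖ 1) * A' * (1 ⊗ₖ X) := by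
    apply smul_right_injective _ hG
    calc G.det • ((1 ⊗ₖ X) * A * (G.adjugate ⊗ₖ 1))
        = (G.adjugate ⊗ₖ 1) * ((G ⊗ₖ X) * A) * (G.adjugate ⊗ₖ 1) := by
          rw [← mul_assoc, hleft, smul_mul_assoc, smul_mul_assoc]
      _ = (G.adjugate ⊗ₖ 1) * A' * ((G ⊗ₖ X) * (G.adjugate ⊗ₖ 1)) := by
          rw [h.eq]; simp only [mul_assoc]
      _ = G.det • ((G.adjugate ⊗ₖ 1) * A' * (1 ⊗ₖ X)) := by rw [hright, mul_smul_comm]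
  rw [SemiconjBy]
  simpa only [pt0_kronecker_mul_mul_kronecker, Matrix.transpose_one, Matrix.one_kronecker_one,
    one_mul, mul_one] using congrArg (pt0 N) hcross

lemma tr0_kronecker_one_mul_comm (G : Matrix (Fin 2) (Fin 2) ℂ)
    (A : Matrix (FullIdx N) (FullIdx N) ℂ) :
    tr0 N ((G ⊗ₖ 1) * A) = tr0 N (A * (G ⊗ₖ 1)) := by
  ext s t
  simp only [tr0, Matrix.mul_apply, Matrix.kroneckerMap_apply, Matrix.one_apply,
    Fintype.sum_prod_type, mul_ite, ite_mul, mul_one, mul_zero, zero_mul, sum_ite_eq, sum_ite_eq',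
    mem_univ, if_true]
  rw [sum_comm]
  simp only [mul_comm]

lemma tr0_one_kronecker_mul (X : Matrix (Fin N → Fin 2) (Fin N → Fin 2) ℂ)
    (A : Matrix (FullIdx N) (FullIdx N) ℂ) : tr0 N ((1 ⊗ₖ X) * A) = X * tr0 N A := by
  ext s t
  simp only [tr0, Matrix.mul_apply, Matrix.kroneckerMap_apply, Matrix.one_apply,
    Fintype.sum_prod_type_right, ite_mul, one_mul, zero_mul, sum_ite_eq, mem_univ, if_true, mul_sum]
  exact sum_comm

lemma tr0_mul_one_kronecker (X : Matrix (Fin N → Fin 2) (Fin N → Fin 2) ℂ)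
    (A : Matrix (FullIdx N) (FullIdx N) ℂ) : tr0 N (A * (1 ⊗ₖ X)) = tr0 N A * X := by
  ext s t
  simp only [tr0, Matrix.mul_apply, Matrix.kroneckerMap_apply, Matrix.one_apply,
    Fintype.sum_prod_type_right, ite_mul, mul_ite, one_mul, zero_mul, mul_zero, sum_ite_eq',
    mem_univ, if_true, sum_mul]
  exact sum_comm

lemma semiconjBy_tr0 {G : Matrix (Fin 2) (Fin 2) ℂ} (hG : G.det ≠ 0)
    {X : Matrix (Fin N → Fin 2) (Fin N → Fin 2) ℂ} {A A' : Matrix (FullIdx N) (FullIdx N) ℂ}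
    (h : SemiconjBy (G ⊗ₖ X) A A') : SemiconjBy X (tr0 N A) (tr0 N A') := by
  have hG' : IsUnit G.det := hG.isUnit
  have hleft : (1 : Matrix _ _ ℂ) ⊗ₖ X = (G⁻¹ ⊗ₖ 1) * (G ⊗ₖ X) := by
    rw [← Matrix.mul_kronecker_mul, Matrix.nonsing_inv_mul _ hG', one_mul]
  have hright : (G ⊗ₖ X) * (G⁻¹ ⊗ₖ 1) = (1 : Matrix _ _ ℂ) ⊗ₖ X := by
    rw [← Matrix.mul_kronecker_mul, Matrix.mul_nonsing_inv _ hG', mul_one]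
  calc X * tr0 N A = tr0 N ((G⁻¹ ⊗ₖ 1) * ((G ⊗ₖ X) * A)) := by
        rw [← tr0_one_kronecker_mul, hleft, mul_assoc]
    _ = tr0 N (A' * ((G ⊗ₖ X) * (G⁻¹ ⊗ₖ 1))) := by
        rw [h.eq, tr0_kronecker_one_mul_comm, mul_assoc]
    _ = tr0 N A' * X := by rw [hright, tr0_mul_one_kronecker]

end Auxiliary

section Bulk

open scoped Kronecker Matrix

variable {G : Matrix (Fin 2) (Fin 2) ℂ}

lemma Rmat_eq_add_smul_prodComm (η z : ℂ) :
    Rmat η z = ((sinh (z + η) - sinh η + sinh z) / 2) • 1 +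
      ((sinh (z + η) - sinh η - sinh z) / 2) • (sigmaZ ⊗ₖ sigmaZ) +
      sinh η • (Equiv.prodComm (Fin 2) (Fin 2)).toPEquiv.toMatrix := by
  ext ⟨i, a⟩ ⟨j, b⟩
  fin_cases i <;> fin_cases a <;> fin_cases j <;> fin_cases b <;>
    simp [Rmat, sigmaZ, PEquiv.toMatrix_apply] <;> ring

lemma commute_kronecker_self_Rmat (hG : Commute (G ⊗ₖ G) (sigmaZ ⊗ₖ sigmaZ)) (η z : ℂ) :
    Commute (G ⊗ₖ G) (Rmat η z) := by
  rw [Rmat_eq_add_smul_prodComm]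
  exact (((Commute.one_right _).smul_right _).add_right (hG.smul_right _)).add_right
    ((commute_kronecker_self_prodComm G).smul_right _)

variable {N : ℕ} {η : ℂ}

/-- The relabelling that splits the site `n` off the quantum space and groups it with the auxiliary
space: these are the two factors on which `R₀ₙ` acts. -/
def siteSplit (n : Fin N) :
    FullIdx N ≃ (Fin 2 × Fin 2) × ({m : Fin N // m ≠ n} → Fin 2) :=
  ((Equiv.refl _).prodCongr (Equiv.funSplitAt n (Fin 2))).trans (Equiv.prodAssoc _ _ _).symm

lemma R0n_eq_submatrix_siteSplit (n : Fin N) (z : ℂ) :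
    R0n N η n z = (Rmat η z ⊗ₖ 1).submatrix (siteSplit n) (siteSplit n) := by
  ext p q
  simp [R0n, siteSplit, Matrix.one_apply, funext_iff]

lemma kronecker_tensorPower_eq_submatrix_siteSplit (G : Matrix (Fin 2) (Fin 2) ℂ) (n : Fin N) :
    G ⊗ₖ tensorPower (Fin N) G =
      ((G ⊗ₖ G) ⊗ₖ tensorPower {m : Fin N // m ≠ n} G).submatrix (siteSplit n) (siteSplit n) := by
  ext p q
  simp [tensorPower, siteSplit, mul_assoc, Fintype.prod_eq_mul_prod_subtype_ne _ n]

lemma commute_kronecker_tensorPower_R0n {z : ℂ} (hR : Commute (G ⊗ₖ G) (Rmat η z)) (n : Fin N) :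
    Commute (G ⊗ₖ tensorPower (Fin N) G) (R0n N η n z) := by
  rw [kronecker_tensorPower_eq_submatrix_siteSplit G n, R0n_eq_submatrix_siteSplit, Commute,
    SemiconjBy, Matrix.submatrix_mul_equiv, Matrix.submatrix_mul_equiv,
    (semiconjBy_kronecker hR (SemiconjBy.one_right _)).eq]

lemma commute_kronecker_tensorPower_Mmono (hR : ∀ z, Commute (G ⊗ₖ G) (Rmat η z))
    (ξ : Fin N → ℂ) (z : ℂ) : Commute (G ⊗ₖ tensorPower (Fin N) G) (Mmono N η ξ z) := by
  refine Commute.list_prod_right _ _ fun A hA => ?_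
  obtain ⟨k, rfl⟩ := List.mem_ofFn.1 hA
  exact commute_kronecker_tensorPower_R0n (hR _) _

lemma semiconjBy_sigmaY_adjugate_transpose (G : Matrix (Fin 2) (Fin 2) ℂ) :
    SemiconjBy sigmaY G.adjugateᵀ G := by
  ext i j
  fin_cases i <;> fin_cases j <;>
    simp [sigmaY, Matrix.adjugate_fin_two, Matrix.mul_apply, mul_comm]

lemma semiconjBy_sigmaY_self_adjugate_transpose (G : Matrix (Fin 2) (Fin 2) ℂ) :
    SemiconjBy sigmaY G G.adjugateᵀ := by
  have hadj : G.adjugateᵀ.adjugateᵀ = G := by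
    simp [← Matrix.adjugate_transpose, Matrix.adjugate_adjugate]
  simpa only [hadj] using semiconjBy_sigmaY_adjugate_transpose G.adjugateᵀ

lemma commute_kronecker_tensorPower_Mhat (hG : G.det ≠ 0)
    (hR : ∀ z, Commute (G ⊗ₖ G) (Rmat η z)) (ξ : Fin N → ℂ) (z : ℂ) :
    Commute (G ⊗ₖ tensorPower (Fin N) G) (Mhat N η ξ z) := by
  have hin := semiconjBy_auxOp_kronecker (tensorPower (Fin N) G)
    (semiconjBy_sigmaY_self_adjugate_transpose G)
  have hpt : Commute (G.adjugateᵀ ⊗ₖ tensorPower (Fin N) G) (pt0 N (Mmono N η ξ (-z))) :=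
    semiconjBy_pt0 hG (commute_kronecker_tensorPower_Mmono hR ξ (-z))
  have hout := semiconjBy_auxOp_kronecker (tensorPower (Fin N) G)
    (semiconjBy_sigmaY_adjugate_transpose G)
  have hprod : Commute _ (G ⊗ₖ tensorPower (Fin N) G) := (hout.mul_left hpt.symm).mul_left hin
  exact hprod.symm.smul_right _

end Bulk

section Boundary

open scoped Kronecker

lemma det_sigmaY_ne_zero : sigmaY.det ≠ 0 := by
  simp [sigmaY]

lemma det_sigmaZ_ne_zero : sigmaZ.det ≠ 0 := by
  simp [sigmaZ]

lemma sigmaY_mul_self : sigmaY * sigmaY = 1 := by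
  simp [sigmaY, Matrix.one_fin_two]

lemma sigmaZ_mul_self : sigmaZ * sigmaZ = 1 := by
  simp [sigmaZ, Matrix.one_fin_two]

lemma sigmaY_mul_sigmaZ : sigmaY * sigmaZ = -(sigmaZ * sigmaY) := by
  simp [sigmaY, sigmaZ]

lemma commute_sigmaY_kronecker_sigmaZ_kronecker :
    Commute (sigmaY ⊗ₖ sigmaY) (sigmaZ ⊗ₖ sigmaZ) := by
  rw [Commute, SemiconjBy, ← Matrix.mul_kronecker_mul, ← Matrix.mul_kronecker_mul,
    sigmaY_mul_sigmaZ]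
  ext
  exact neg_mul_neg _ _

lemma semiconjBy_sigmaY_Kmat (η z ζ κ τ : ℂ) :
    SemiconjBy sigmaY (Kmat η z ζ κ τ) (Kmat η z (-ζ) κ (-τ)) := by
  have hdiag₀ : sinh (z - η / 2 + -ζ) = -sinh (ζ - z + η / 2) := by
    rw [← sinh_neg]; congr 1; ring
  have hdiag₁ : sinh (-ζ - z + η / 2) = -sinh (z - η / 2 + ζ) := by
    rw [← sinh_neg]; congr 1; ring
  ext i j
  fin_cases i <;> fin_cases j <;>
    simp [sigmaY, Kmat, Matrix.mul_apply, sinh_neg, hdiag₀, hdiag₁, inv_neg] <;> ring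

lemma semiconjBy_sigmaZ_Kmat (η z ζ κ τ : ℂ) :
    SemiconjBy sigmaZ (Kmat η z ζ κ τ) (Kmat η z ζ (-κ) τ) := by
  ext i j
  fin_cases i <;> fin_cases j <;> simp [sigmaZ, Kmat, Matrix.mul_apply]

lemma GammaY_eq_tensorPower (N : ℕ) : GammaY N = tensorPower (Fin N) sigmaY := rfl

lemma GammaZ_eq_tensorPower (N : ℕ) : GammaZ N = tensorPower (Fin N) sigmaZ := rfl

lemma semiconjBy_tensorPower_Tmat {N : ℕ} {η : ℂ} {G : Matrix (Fin 2) (Fin 2) ℂ} (hG : G.det ≠ 0)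
    (hR : ∀ x, Commute (G ⊗ₖ G) (Rmat η x))
    {z ζp ζm κp κm τp τm ζp' ζm' κp' κm' τp' τm' : ℂ}
    (hp : SemiconjBy G (Kplus η ζp κp τp z) (Kplus η ζp' κp' τp' z))
    (hm : SemiconjBy G (Kminus η ζm κm τm z) (Kminus η ζm' κm' τm' z)) (ξ : Fin N → ℂ) :
    SemiconjBy (tensorPower (Fin N) G) (Tmat N η ξ ζp ζm κp κm τp τm z)
      (Tmat N η ξ ζp' ζm' κp' κm' τp' τm' z) := by
  have hM := commute_kronecker_tensorPower_Mmono hR ξ z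
  have hMhat := commute_kronecker_tensorPower_Mhat hG hR ξ z
  have hKp := semiconjBy_kronecker_auxOp (tensorPower (Fin N) G) hp
  have hKm := semiconjBy_kronecker_auxOp (tensorPower (Fin N) G) hm
  exact semiconjBy_tr0 hG (((hKp.mul_right hM).mul_right hKm).mul_right hMhat)

end Boundary

/-- the similarity transformations implementing two `Z₂` symmetries of the
boundary parameters: the transformed transfer matrices are conjugated by `Γ_y`, `Γ_z`, hence
isospectral. -/
theorem statement15
    (N : ℕ) (hN : 1 ≤ N) (η : ℂ) (ξ : Fin N → ℂ)
    (ζp ζm κp κm τp τm : ℂ)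
    (hζp : Complex.sinh ζp ≠ 0) (hζm : Complex.sinh ζm ≠ 0) (z : ℂ) :
    Tmat N η ξ (-ζp) (-ζm) κp κm (-τp) (-τm) z =
      GammaY N * Tmat N η ξ ζp ζm κp κm τp τm z * GammaY N ∧
    Tmat N η ξ ζp ζm (-κp) (-κm) τp τm z =
      GammaZ N * Tmat N η ξ ζp ζm κp κm τp τm z * GammaZ N := by
  rw [GammaY_eq_tensorPower, GammaZ_eq_tensorPower]
  constructor
  · have hR := commute_kronecker_self_Rmat commute_sigmaY_kronecker_sigmaZ_kronecker η
    exact eq_conj_of_semiconjBy_tensorPower sigmaY_mul_self <|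
      semiconjBy_tensorPower_Tmat det_sigmaY_ne_zero hR
        (semiconjBy_sigmaY_Kmat ..) (semiconjBy_sigmaY_Kmat ..) ξ
  · have hR := commute_kronecker_self_Rmat (Commute.refl _) η
    exact eq_conj_of_semiconjBy_tensorPower sigmaZ_mul_self <|
      semiconjBy_tensorPower_Tmat det_sigmaZ_ne_zero hR
        (semiconjBy_sigmaZ_Kmat ..) (semiconjBy_sigmaZ_Kmat ..) ξ

end XXZ
end
end
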